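/- arXiv:2403.06767 — 4 statements merged into one kernel-verified Lean document; each statement's English description precedes it below -/
import Mathlib

section
/- Let m ≥ 1, k = 2^m, let X be a compact Hausdorff space, and let A be a unital ℤ/k-C(X)-algebra. Then the function x ↦ wdim(A_x, ℤ/k) ∈ ℕ ∪ {∞} is upper semicontinuous on X; that is, for every n ∈ ℕ the set {x ∈ X : wdim(A_x, ℤ/k) ≤ n} is open in X. -/
/-- `ζ = exp(2πi/k)`. -/
noncomputable def ltZeta (k : ℕ) : ℂ := Complex.exp (2 * Real.pi * Complex.I / k)

/-- The "asterisk" set `✲_k = {t·ζ^m : t ∈ [0,1], 0 ≤ m < k} ⊆ ℂ`. -/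
noncomputable def ltAsterisk (k : ℕ) : Set ℂ :=
  {z | ∃ t ∈ Set.Icc (0 : ℝ) 1, ∃ m : ℕ, m < k ∧ z = (t : ℂ) * ltZeta k ^ m}

/-- The weak local-triviality dimension of the `ℤ/k`-action generated by `α`. -/
noncomputable def wdimLT {A : Type*} [Ring A] [StarRing A] [Algebra ℂ A]
    (k : ℕ) (α : A ≃⋆ₐ[ℂ] A) : ℕ∞ :=
  sInf ((fun n : ℕ => (n : ℕ∞)) '' {n : ℕ | ∃ a : Fin (n + 1) → A,
    (∀ i, IsStarNormal (a i)) ∧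
    (∀ i, α (a i) = ltZeta k • a i) ∧
    (∀ i, spectrum ℂ (a i) ⊆ ltAsterisk k) ∧
    IsUnit (∑ i, a i * star (a i))})


section LTHelpers
open Function

theorem lt_orth {B : Type*} [Ring B] [StarRing B] [Algebra ℂ B] (β : B ≃⋆ₐ[ℂ] B) (k : ℕ)
    (hβ : (⇑β)^[k] = id) (hk : 0 < k) (s : B)
    (hs : ∀ j, 0 < j → j < k → s * (⇑β)^[j] s = 0) (a b : ℕ) (hab : a % k ≠ b % k) :
    (⇑β)^[a] s * (⇑β)^[b] s = 0 := by
  have hper : ∀ x, IsPeriodicPt β k x := fun x => by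
    simp [IsPeriodicPt, IsFixedPt, hβ]
  set j := (b + (k - a % k)) % k with hj
  have hak : a % k < k := Nat.mod_lt _ hk
  have hmod : (a + j) % k = b % k := by
    rw [hj, Nat.add_mod_mod]
    have : a + (b + (k - a % k)) = b + k * (a / k + 1) := by
      have := Nat.div_add_mod a k
      rw [mul_add]; omega
    rw [this, Nat.add_mul_mod_self_left]
  have hj0 : 0 < j := by
    rcases Nat.eq_zero_or_pos j with h | h
    · rw [h] at hmod; exact absurd hmod hab
    · exact h
  have e : (⇑β)^[b] s = (⇑β)^[a] ((⇑β)^[j] s) := by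
    rw [← iterate_add_apply, ← (hper s).iterate_mod_apply b, ← hmod, (hper s).iterate_mod_apply]
  rw [e, ← iterate_map_mul, hs j hj0 (Nat.mod_lt _ hk), iterate_map_zero]

theorem lt_sum_fix {B : Type*} [Ring B] [StarRing B] [Algebra ℂ B] (β : B ≃⋆ₐ[ℂ] B) (k : ℕ)
    (hβ : (⇑β)^[k] = id) (s : B) :
    β (∑ i ∈ Finset.range k, (⇑β)^[i] s) = ∑ i ∈ Finset.range k, (⇑β)^[i] s := by
  rw [map_sum]
  have h1 := Finset.sum_range_succ (fun i => (⇑β)^[i] s) k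
  rw [Finset.sum_range_succ'] at h1
  simp only [hβ, iterate_zero, add_left_inj] at h1
  rw [← h1]
  exact Finset.sum_congr rfl fun i _ => (iterate_succ_apply' _ _ _).symm

theorem lt_iter_selfadj {B : Type*} [Ring B] [StarRing B] [Algebra ℂ B] (β : B ≃⋆ₐ[ℂ] B)
    (j : ℕ) (s : B) (hs : IsSelfAdjoint s) : IsSelfAdjoint ((⇑β)^[j] s) := by
  induction j with
  | zero => exact hs
  | succ j ih => rw [iterate_succ_apply']; exact ih.map β

theorem lt_iter_nonneg {B : Type*} [CStarAlgebra B] [PartialOrder B] [StarOrderedRing B]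
    (β : B ≃⋆ₐ[ℂ] B)
    (j : ℕ) (s : B) (hs : 0 ≤ s) : 0 ≤ ((⇑β)^[j] s) := by
  induction j with
  | zero => exact hs
  | succ j ih => rw [iterate_succ_apply']; exact map_nonneg β ih

theorem lt_lift_selfadj {A B : Type*} [CStarAlgebra A] [CStarAlgebra B] (π : A →⋆ₐ[ℂ] B)
    (hπ : Surjective π) (s : B) (hs : IsSelfAdjoint s) : ∃ x, IsSelfAdjoint x ∧ π x = s := by
  obtain ⟨x, rfl⟩ := hπ s
  refine ⟨(2⁻¹ : ℝ) • (x + star x), ?_, ?_⟩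
  · exact (IsSelfAdjoint.all (2⁻¹ : ℝ)).smul (IsSelfAdjoint.add_star_self x)
  · have : π ((2⁻¹ : ℝ) • (x + star x)) = (2⁻¹ : ℂ) • (π x + star (π x)) := by
      rw [← map_star, ← map_add, ← map_smul]
      congr 1
      rw [← Complex.coe_smul]; simp
    rw [this, hs.star_eq, ← two_smul ℂ, smul_smul]; simp

theorem lt_lift {A B : Type*} [CStarAlgebra A] [PartialOrder A] [StarOrderedRing A]
    [CStarAlgebra B] [PartialOrder B] [StarOrderedRing B] (π : A →⋆ₐ[ℂ] B) (hπ : Surjective π)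
    (m : ℕ) : ∀ (α : A ≃⋆ₐ[ℂ] A) (β : B ≃⋆ₐ[ℂ] B), (∀ a, π (α a) = β (π a)) →
      (⇑α)^[2 ^ m] = id → (⇑β)^[2 ^ m] = id → ∀ (e : A) (s : B), IsSelfAdjoint e → α e = e →
      0 ≤ s → (∀ j, 0 < j → j < 2 ^ m → s * (⇑β)^[j] s = 0) → π e * s = s * s →
      ∃ p : A, 0 ≤ p ∧ π p = s ^ (3 ^ (m + 1)) ∧ (∀ y, e * y = 0 → p * y = 0) ∧
        ∀ j, 0 < j → j < 2 ^ m → p * (⇑α)^[j] p = 0 := by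
  induction m with
  | zero =>
    intro α β hαβ hα hβ e s he hαe hs horth hes
    have hss : IsSelfAdjoint s := .of_nonneg hs
    have hse : s * π e = s * s := by
      have := congrArg star hes
      simpa [star_mul, hss.star_eq, (he.map π).star_eq] using this
    obtain ⟨x, hx, hxs⟩ := lt_lift_selfadj π hπ s hss
    have hxp : π (x⁺) = s := by
      have h1 := CFC.posPart_negPart_unique (a := s) (b := π (x⁺)) (c := π (x⁻))
        (by rw [← map_sub, CFC.posPart_sub_negPart x hx, hxs])
        (by rw [← map_mul, CFC.posPart_mul_negPart, map_zero])
        (map_nonneg π (CFC.posPart_nonneg x)) (map_nonneg π (CFC.negPart_nonneg x))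
      rw [← h1.1]; exact (CFC.posPart_eq_self s).2 hs
    refine ⟨e * x⁺ * e, he.conjugate_nonneg (CFC.posPart_nonneg x), ?_, ?_, ?_⟩
    · rw [map_mul, map_mul, hxp, hes, mul_assoc, hse]; simp [pow_succ, mul_assoc]
    · intro y hy; rw [mul_assoc, hy, mul_zero]
    · intro j h1 h2; simp at h2; omega
  | succ m ih =>
    intro α β hαβ hα hβ e s he hαe hs horth hes
    have hss : IsSelfAdjoint s := .of_nonneg hs
    have hse : s * π e = s * s := by
      have := congrArg star hes
      simpa [star_mul, hss.star_eq, (he.map π).star_eq] using this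
    set γ := α.trans α with hγ
    set δ := β.trans β with hδ
    have hγi : ∀ i, (⇑γ)^[i] = (⇑α)^[2 * i] := fun i => by
      rw [iterate_mul]; rfl
    have hδi : ∀ i, (⇑δ)^[i] = (⇑β)^[2 * i] := fun i => by
      rw [iterate_mul]; rfl
    have hγα : ∀ a, γ a = α (α a) := fun a => rfl
    have hδβ : ∀ a, δ a = β (β a) := fun a => rfl
    have hγδ : ∀ a, π (γ a) = δ (π a) := fun a => by rw [hγα, hδβ, hαβ, hαβ]
    have hγk : (⇑γ)^[2 ^ m] = id := by rw [hγi, ← pow_succ', hα]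
    have hδk : (⇑δ)^[2 ^ m] = id := by rw [hδi, ← pow_succ', hβ]
    set s' := s ^ 3 with hs'
    have hs'0 : 0 ≤ s' := by
      have : s' = s * s * s := by rw [hs', pow_succ, pow_two]
      rw [this]; exact conjugate_nonneg_of_nonneg hs hs
    have hs'e : π e * s * π e = s' := by
      rw [hes, mul_assoc, hse, hs', pow_succ, pow_two, mul_assoc]
    have horth' : ∀ j, 0 < j → j < 2 ^ (m + 1) → s' * (⇑β)^[j] s' = 0 := by
      intro j h1 h2
      have : s' = s * s * s := by rw [hs', pow_succ, pow_two]
      rw [this, iterate_map_mul, iterate_map_mul]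
      have := horth j h1 h2
      calc _ = s * s * (s * (⇑β)^[j] s) * (⇑β)^[j] s * (⇑β)^[j] s := by simp only [mul_assoc]
        _ = 0 := by simp [this]
    have hk0 : 0 < 2 ^ (m + 1) := by positivity
    have horth2 := lt_orth β _ hβ hk0 s' horth'
    obtain ⟨x, hx, hxs⟩ := lt_lift_selfadj π hπ s hss
    set u := ∑ i ∈ Finset.range (2 ^ m), (⇑γ)^[i] x with hu
    have husa : IsSelfAdjoint u := by
      rw [hu]
      exact isSelfAdjoint_sum _ fun i _ => lt_iter_selfadj γ i x hx
    have hγu : γ u = u := lt_sum_fix γ _ hγk x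
    set h := e * (u - α u) * e with hh
    have hsa : IsSelfAdjoint h := by
      have := (husa.sub (husa.map α)).conjugate e
      rwa [he.star_eq] at this
    have hαh : α h = -h := by
      rw [hh, map_mul, map_mul, map_sub, hαe, ← hγα, hγu]; noncomm_ring
    set w := ∑ i ∈ Finset.range (2 ^ m), (⇑δ)^[i] s' with hw
    have hβe : β (π e) = π e := by rw [← hαβ, hαe]
    have hδe : ∀ i, (⇑δ)^[i] (π e) = π e := fun i =>
      (show IsFixedPt δ (π e) from by rw [IsFixedPt, hδβ, hβe, hβe]).iterate i
    have hπiter : ∀ i y, π ((⇑γ)^[i] y) = (⇑δ)^[i] (π y) := fun i y =>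
      (Semiconj.iterate_right (f := π) (fun a => hγδ a) i) y
    have hπu : π e * π u * π e = w := by
      rw [hu, map_sum, Finset.mul_sum, Finset.sum_mul, hw]
      refine Finset.sum_congr rfl fun i _ => ?_
      rw [hπiter, hxs, ← hs'e, iterate_map_mul, iterate_map_mul, hδe]
    have hπh : π h = w - β w := by
      rw [← hπu, hh, map_mul, map_mul, map_sub, map_mul, map_mul, hβe, hαβ]; noncomm_ring
    have hw0 : 0 ≤ w := Finset.sum_nonneg fun i _ => lt_iter_nonneg δ i s' hs'0
    have hwβ : w * β w = 0 := by
      rw [hw, map_sum, Finset.sum_mul]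
      refine Finset.sum_eq_zero fun i _ => ?_
      rw [Finset.mul_sum]
      refine Finset.sum_eq_zero fun j _ => ?_
      rw [hδi, hδi, ← iterate_succ_apply' (⇑β)]
      apply horth2
      intro hc
      have h2 : (2:ℕ) ∣ 2 ^ (m + 1) := dvd_pow_self 2 (by omega)
      have := congrArg (· % 2) hc
      simp only [Nat.mod_mod_of_dvd _ h2] at this
      omega
    have hs'w : w * s' = s' * s' := by
      rw [hw, Finset.sum_mul, Finset.sum_eq_single 0]
      · simp
      · intro i hi hi0
        rw [hδi]
        apply horth2 _ 0
        rw [Nat.mod_eq_of_lt, Nat.zero_mod]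
        · omega
        · rw [pow_succ']; have := Finset.mem_range.1 hi; omega
      · intro h0; simp at h0
    have hhp : π (h⁺) = w := by
      have h1 := CFC.posPart_negPart_unique (a := π h) (b := π (h⁺)) (c := π (h⁻))
        (by rw [← map_sub, CFC.posPart_sub_negPart h hsa])
        (by rw [← map_mul, CFC.posPart_mul_negPart, map_zero])
        (map_nonneg π (CFC.posPart_nonneg h)) (map_nonneg π (CFC.negPart_nonneg h))
      have h2 := CFC.posPart_negPart_unique hπh hwβ hw0 (map_nonneg β hw0)
      rw [← h1.1, h2.1]
    have hα1 := CFC.posPart_negPart_unique (a := h) (b := α (h⁻)) (c := α (h⁺))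
        (by rw [← map_sub, ← neg_inj, ← hαh, ← map_neg, neg_sub,
              CFC.posPart_sub_negPart h hsa])
        (by rw [← map_mul, CFC.negPart_mul_posPart, map_zero])
        (map_nonneg α (CFC.negPart_nonneg h)) (map_nonneg α (CFC.posPart_nonneg h))
    have hpsa : IsSelfAdjoint (h⁺) := .of_nonneg (CFC.posPart_nonneg h)
    have hnsa : IsSelfAdjoint (h⁻) := .of_nonneg (CFC.negPart_nonneg h)
    obtain ⟨p, hp0, hπp, hpy, hpo⟩ := ih γ δ hγδ hγk hδk (h⁺) s' hpsa
      (by rw [hγα, ← hα1.2, ← hα1.1]) hs'0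
      (fun j h1 h2 => by
        rw [hδi]; exact horth' _ (by omega) (by rw [pow_succ']; omega))
      (by rw [hhp, hs'w])
    have hpsa' : IsSelfAdjoint p := .of_nonneg hp0
    have hnp : h⁻ * p = 0 := by
      have := congrArg star (hpy (h⁻) (CFC.posPart_mul_negPart h))
      simpa [star_mul, hnsa.star_eq, hpsa'.star_eq] using this
    refine ⟨p, hp0, ?_, ?_, ?_⟩
    · rw [hπp, hs', ← pow_mul, ← pow_succ']
    · intro y hy
      apply hpy
      have h1 : h * y = 0 := by rw [hh, mul_assoc, hy, mul_zero]
      have h2 : h⁺ * (h⁺ * y) = 0 := by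
        have : h⁺ * h = h⁺ * h⁺ := by
          have h5 := congrArg (fun z => h⁺ * z) (CFC.posPart_sub_negPart h hsa)
          simp only [mul_sub, CFC.posPart_mul_negPart, sub_zero] at h5
          exact h5.symm
        rw [← mul_assoc, ← this, mul_assoc, h1, mul_zero]
      rw [← CStarRing.star_mul_self_eq_zero_iff, star_mul, hpsa.star_eq, mul_assoc, h2, mul_zero]
    · intro j h1 h2
      rcases Nat.even_or_odd' j with ⟨i, rfl | rfl⟩
      · rw [← hγi]; exact hpo i (by omega) (by rw [pow_succ'] at h2; omega)
      · apply hpy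
        have h3 : h⁺ = (⇑α)^[2 * i + 1] (h⁻) := by
          rw [iterate_succ_apply, ← hα1.1, ← hγi]
          exact ((show IsFixedPt γ (h⁺) from by
            rw [IsFixedPt, hγα, ← hα1.2, ← hα1.1]).iterate i).symm
        rw [h3, ← iterate_map_mul, hnp, iterate_map_zero]

theorem lt_lift_top {A B : Type*} [CStarAlgebra A] [PartialOrder A] [StarOrderedRing A]
    [CStarAlgebra B] [PartialOrder B] [StarOrderedRing B] (π : A →⋆ₐ[ℂ] B) (hπ : Surjective π)
    (m : ℕ) (α : A ≃⋆ₐ[ℂ] A) (β : B ≃⋆ₐ[ℂ] B) (hαβ : ∀ a, π (α a) = β (π a))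
    (hα : (⇑α)^[2 ^ m] = id) (hβ : (⇑β)^[2 ^ m] = id) (s : B) (hs : 0 ≤ s)
    (horth : ∀ j, 0 < j → j < 2 ^ m → s * (⇑β)^[j] s = 0) :
      ∃ p : A, 0 ≤ p ∧ π p = s ^ (3 ^ (m + 1)) ∧
        ∀ j, 0 < j → j < 2 ^ m → p * (⇑α)^[j] p = 0 := by
  obtain ⟨x, hx, hxs⟩ := lt_lift_selfadj π hπ s (.of_nonneg hs)
  obtain ⟨p, h1, h2, -, h3⟩ := lt_lift π hπ m α β hαβ hα hβ
    (∑ i ∈ Finset.range (2 ^ m), (⇑α)^[i] x) s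
    (isSelfAdjoint_sum _ fun i _ => lt_iter_selfadj α i x hx) (lt_sum_fix α _ hα x) hs horth (by
      have hπiter : ∀ i y, π ((⇑α)^[i] y) = (⇑β)^[i] (π y) := fun i y =>
        (Semiconj.iterate_right (f := π) (fun a => hαβ a) i) y
      rw [map_sum, Finset.sum_mul, Finset.sum_eq_single 0]
      · simp [hxs]
      · intro i hi hi0
        rw [hπiter, hxs]
        apply lt_orth β _ hβ (by positivity) s horth _ 0
        rw [Nat.mod_eq_of_lt (Finset.mem_range.1 hi)]; simpa using hi0
      · intro h0; simp at h0)
  exact ⟨p, h1, h2, h3⟩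

end LTHelpers

section LTHelpers2
open Function

theorem lt_zeta_prim (k : ℕ) (hk : k ≠ 0) : IsPrimitiveRoot (ltZeta k) k :=
  Complex.isPrimitiveRoot_exp k hk

theorem lt_pow_family {A : Type*} [Ring A] [Algebra ℂ A] (k : ℕ) (q : ℕ → A) (c : ℕ → ℂ)
    (hq : ∀ i < k, ∀ j < k, i ≠ j → q i * q j = 0) (n : ℕ) :
    (∑ j ∈ Finset.range k, c j • q j) ^ (n + 1) =
      ∑ j ∈ Finset.range k, (c j ^ (n + 1)) • q j ^ (n + 1) := by
  induction n with
  | zero => simp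
  | succ n ih =>
    rw [pow_succ, ih, Finset.sum_mul]
    refine Finset.sum_congr rfl fun i hi => ?_
    rw [Finset.mul_sum, Finset.sum_eq_single i]
    · rw [smul_mul_smul_comm, ← pow_succ, ← pow_succ]
    · intro j hj hji
      rw [smul_mul_smul_comm, pow_succ (q i), mul_assoc (q i ^ n),
        hq i (Finset.mem_range.1 hi) j (Finset.mem_range.1 hj) hji.symm, mul_zero, smul_zero]
    · intro h; exact absurd hi h

theorem lt_normal_family {A : Type*} [Ring A] [StarRing A] [Algebra ℂ A] [StarModule ℂ A]
    (k : ℕ) (q : ℕ → A) (c : ℕ → ℂ)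
    (hq : ∀ i < k, ∀ j < k, i ≠ j → q i * q j = 0) (hsa : ∀ i, IsSelfAdjoint (q i)) :
    IsStarNormal (∑ j ∈ Finset.range k, c j • q j) := by
  have key : ∀ c d : ℕ → ℂ, (∑ j ∈ Finset.range k, c j • q j) * (∑ j ∈ Finset.range k, d j • q j)
      = ∑ j ∈ Finset.range k, (c j * d j) • (q j * q j) := by
    intro c d
    rw [Finset.sum_mul]
    refine Finset.sum_congr rfl fun i hi => ?_
    rw [Finset.mul_sum, Finset.sum_eq_single i]
    · rw [smul_mul_smul_comm]
    · intro j hj hji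
      rw [smul_mul_smul_comm,
        hq i (Finset.mem_range.1 hi) j (Finset.mem_range.1 hj) hji.symm, smul_zero]
    · intro h; exact absurd hi h
  have hst : star (∑ j ∈ Finset.range k, c j • q j)
      = ∑ j ∈ Finset.range k, (star (c j)) • q j := by
    rw [star_sum]
    exact Finset.sum_congr rfl fun i _ => by rw [star_smul, (hsa i).star_eq]
  constructor
  rw [Commute, SemiconjBy, hst, key, key]
  exact Finset.sum_congr rfl fun i _ => by rw [mul_comm]

theorem lt_cone_of_pow (k : ℕ) (hk : 0 < k) (z : ℂ) (r : ℝ) (hr : 0 ≤ r) (h : z ^ k = r) :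
    ∃ t : ℝ, 0 ≤ t ∧ ∃ m < k, z = t * ltZeta k ^ m := by
  have hk' : k ≠ 0 := hk.ne'
  have : NeZero k := ⟨hk'⟩
  by_cases hz : z = 0
  · exact ⟨0, le_rfl, 0, hk, by simp [hz]⟩
  have hn : (‖z‖ : ℂ) ≠ 0 := by simpa using hz
  have h1 : (z / ‖z‖) ^ k = 1 := by
    rw [div_pow, div_eq_one_iff_eq (pow_ne_zero _ hn), h]
    have := congrArg norm h
    rw [norm_pow, Complex.norm_real, Real.norm_of_nonneg hr] at this
    rw [← this]; push_cast; rfl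
  obtain ⟨i, hi, hi2⟩ := (lt_zeta_prim k hk').eq_pow_of_pow_eq_one h1
  exact ⟨‖z‖, norm_nonneg _, i, hi, by rw [hi2]; field_simp⟩

theorem lt_pow_nonneg {A : Type*} [CStarAlgebra A] [PartialOrder A] [StarOrderedRing A]
    {p : A} (hp : 0 ≤ p) (n : ℕ) : 0 ≤ p ^ n := by
  induction n using Nat.twoStepInduction with
  | zero => simp
  | one => simpa using hp
  | more n ih _ =>
    rw [pow_succ, pow_succ']; exact conjugate_nonneg_of_nonneg ih hp

theorem lt_assemble {A : Type*} [CStarAlgebra A] [PartialOrder A] [StarOrderedRing A]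
    (k : ℕ) (hk : 0 < k) (α : A ≃⋆ₐ[ℂ] A) (hα : (⇑α)^[k] = id) (p : A)
    (hq : ∀ i < k, ∀ j < k, i ≠ j → (⇑α)^[i] p * (⇑α)^[j] p = 0)
    (hq0 : ∀ i, 0 ≤ (⇑α)^[i] p) :
    let a := ∑ j ∈ Finset.range k, ((ltZeta k)⁻¹ ^ j) • (⇑α)^[j] p
    IsStarNormal a ∧ α a = ltZeta k • a ∧
      ∀ z ∈ spectrum ℂ a, ∃ t : ℝ, 0 ≤ t ∧ ∃ m < k, z = t * ltZeta k ^ m := by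
  intro a
  have hprim := lt_zeta_prim k hk.ne'
  have hz0 : ltZeta k ≠ 0 := hprim.ne_zero hk.ne'
  refine ⟨lt_normal_family k _ _ hq fun i => .of_nonneg (hq0 i), ?_, ?_⟩
  · have h1 := Finset.sum_range_succ (fun j => ((ltZeta k)⁻¹ ^ j) • (⇑α)^[j] p) k
    rw [Finset.sum_range_succ'] at h1
    simp only [hα, iterate_zero, pow_zero, inv_pow, hprim.pow_eq_one, inv_one,
      add_left_inj] at h1
    simp only [a, inv_pow]
    conv_rhs => rw [← h1]
    rw [map_sum, Finset.smul_sum]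
    refine Finset.sum_congr rfl fun i _ => ?_
    rw [map_smul, smul_smul, iterate_succ_apply' (⇑α)]
    congr 1
    field_simp
    rw [pow_succ]
  · intro z hz
    obtain ⟨n, rfl⟩ : ∃ n, k = n + 1 := ⟨k - 1, by omega⟩
    have h1 : z ^ (n + 1) ∈ spectrum ℂ (a ^ (n + 1)) := spectrum.pow_mem_pow a _ hz
    have h2 : 0 ≤ a ^ (n + 1) := by
      rw [lt_pow_family _ _ _ hq]
      refine Finset.sum_nonneg fun i _ => ?_
      rw [← pow_mul, mul_comm, pow_mul, inv_pow, hprim.pow_eq_one, inv_one, one_pow, one_smul]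
      exact lt_pow_nonneg (hq0 i) _
    have h3 : (IsSelfAdjoint (a ^ (n+1))) := .of_nonneg h2
    have h4 : z ^ (n+1) = ((z ^ (n+1)).re : ℂ) := h3.mem_spectrum_eq_re h1
    refine lt_cone_of_pow _ hk z _ ?_ h4
    apply spectrum_nonneg_of_nonneg h2
    rw [h4] at h1
    exact spectrum.of_algebraMap_mem ℂ h1
end LTHelpers2

section LTHelpers3
open Function

/-- Constant used in the cut-off function. -/
noncomputable def ltC (k : ℕ) : ℝ := ∑ m ∈ Finset.range k, ‖1 - ltZeta k ^ m‖⁻¹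

/-- Continuous function which on the asterisk is the projection to the positive ray. -/
noncomputable def ltF (k : ℕ) (z : ℂ) : ℝ := max 0 (‖z‖ - ltC k * ‖(‖z‖ : ℂ) - z‖)

theorem ltF_cont (k : ℕ) : Continuous (ltF k) := by
  unfold ltF; fun_prop

theorem ltF_nonneg (k : ℕ) (z : ℂ) : 0 ≤ ltF k z := le_max_left _ _

theorem ltF_val (k : ℕ) (hk : 0 < k) (t : ℝ) (ht : 0 ≤ t) (m : ℕ) :
    ltF k (t * ltZeta k ^ m) = if m % k = 0 then t else 0 := by
  have hprim := lt_zeta_prim k hk.ne'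
  have hn : ‖ltZeta k‖ = 1 := hprim.norm'_eq_one hk.ne'
  have hnn : ‖(t : ℂ) * ltZeta k ^ m‖ = t := by
    rw [norm_mul, norm_pow, hn, one_pow, mul_one, Complex.norm_real, Real.norm_of_nonneg ht]
  have hmod : ltZeta k ^ m = ltZeta k ^ (m % k) := pow_eq_pow_mod m hprim.pow_eq_one
  unfold ltF
  rw [hnn]
  split_ifs with h
  · rw [hmod, h]; simp [ht]
  · apply max_eq_left
    have h1 : (t : ℂ) - t * ltZeta k ^ m = t * (1 - ltZeta k ^ (m % k)) := by rw [hmod]; ring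
    rw [h1, norm_mul, Complex.norm_real, Real.norm_of_nonneg ht]
    have h2 : 0 < ‖1 - ltZeta k ^ (m % k)‖ := by
      rw [norm_pos_iff, sub_ne_zero]
      intro h3
      exact hprim.pow_ne_one_of_pos_of_lt h (Nat.mod_lt _ hk) h3.symm
    have h3 : ‖1 - ltZeta k ^ (m % k)‖⁻¹ ≤ ltC k :=
      Finset.single_le_sum (f := fun m => ‖1 - ltZeta k ^ m‖⁻¹)
        (fun i _ => inv_nonneg.2 (norm_nonneg _)) (Finset.mem_range.2 (Nat.mod_lt m hk))
    have h4 : 1 ≤ ltC k * ‖1 - ltZeta k ^ (m % k)‖ := by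
      rw [inv_le_iff_one_le_mul₀ h2] at h3; exact h3
    nlinarith

theorem ltF_recover (k : ℕ) (hk : 0 < k) (t : ℝ) (ht : 0 ≤ t) (m : ℕ) (hm : m < k) :
    ∑ j ∈ Finset.range k, (ltZeta k)⁻¹ ^ j * (ltF k (ltZeta k ^ j * (t * ltZeta k ^ m)) : ℂ)
      = t * ltZeta k ^ m := by
  have hprim := lt_zeta_prim k hk.ne'
  have hz0 : ltZeta k ≠ 0 := hprim.ne_zero hk.ne'
  have h1 : ∀ j, ltF k (ltZeta k ^ j * (t * ltZeta k ^ m)) = if (j + m) % k = 0 then t else 0 := by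
    intro j
    rw [← ltF_val k hk t ht]
    congr 1; ring
  simp only [h1]
  rw [Finset.sum_eq_single ((k - m) % k)]
  · have h2 : ((k - m) % k + m) % k = 0 := by
      rw [Nat.mod_add_mod, Nat.sub_add_cancel hm.le, Nat.mod_self]
    rw [if_pos h2, mul_comm]
    congr 1
    rw [inv_pow]
    apply inv_eq_of_mul_eq_one_right
    rw [← pow_add, pow_eq_pow_mod _ hprim.pow_eq_one, h2, pow_zero]
  · intro j hj hjn
    rw [if_neg, Complex.ofReal_zero, mul_zero]
    intro h2
    apply hjn
    have hj' := Finset.mem_range.1 hj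
    rcases Nat.eq_zero_or_pos m with rfl | hm0
    · simp at h2 ⊢; rw [Nat.mod_eq_of_lt hj'] at h2; exact h2
    · rw [Nat.mod_eq_of_lt (by omega)]
      obtain ⟨c, hc⟩ := Nat.dvd_of_mod_eq_zero h2
      have : c = 1 := by
        have h5 : c < 2 := by
          by_contra h6
          have : k * 2 ≤ k * c := Nat.mul_le_mul_left _ (by omega)
          omega
        have h6 : c ≠ 0 := by rintro rfl; omega
        omega
      subst this; omega
  · intro h; exact absurd (Finset.mem_range.2 (Nat.mod_lt _ hk)) h

theorem lt_iter_smul {B : Type*} [Ring B] [StarRing B] [Algebra ℂ B] (β : B ≃⋆ₐ[ℂ] B) (ζ : ℂ)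
    (a : B) (h : β a = ζ • a) (j : ℕ) : (⇑β)^[j] a = ζ ^ j • a := by
  induction j with
  | zero => simp
  | succ j ih => rw [iterate_succ_apply', ih, map_smul, h, smul_smul, pow_succ]

open scoped ComplexOrder CStarAlgebra in
theorem lt_extract {B : Type*} [CStarAlgebra B] [PartialOrder B] [StarOrderedRing B]
    (k : ℕ) (hk : 0 < k) (N : ℕ) (hN : 0 < N) (β : B ≃⋆ₐ[ℂ] B) (a : B) (ha : IsStarNormal a)
    (hβa : β a = ltZeta k • a)
    (hsp : ∀ z ∈ spectrum ℂ a, ∃ t : ℝ, 0 ≤ t ∧ ∃ m < k, z = t * ltZeta k ^ m) :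
    ∃ s : B, 0 ≤ s ∧ (∀ j, 0 < j → j < k → s * (⇑β)^[j] s = 0) ∧
      ∑ j ∈ Finset.range k, ((ltZeta k)⁻¹ ^ j) • (⇑β)^[j] (s ^ N) = a := by
  set g : ℂ → ℂ := fun z => ((ltF k z ^ ((N : ℝ)⁻¹) : ℝ) : ℂ) with hg
  have hgc : Continuous g := by
    refine Complex.continuous_ofReal.comp ((ltF_cont k).rpow_const fun x => Or.inr ?_)
    positivity
  have hgN : ∀ z, g z ^ N = ltF k z := by
    intro z
    rw [hg]; simp only
    rw [← Complex.ofReal_pow, ← Real.rpow_natCast, ← Real.rpow_mul (ltF_nonneg k z),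
      inv_mul_cancel₀ (by positivity), Real.rpow_one]
  have hβcfc : ∀ (j : ℕ) (f : ℂ → ℂ), Continuous f →
      (⇑β)^[j] (cfc f a) = cfc (fun z => f (ltZeta k ^ j * z)) a := by
    intro j f hf
    rw [cfc_comp_const_mul (ltZeta k ^ j) f a (hf.continuousOn), ← lt_iter_smul β _ a hβa j]
    have hnj : ∀ j, IsStarNormal ((⇑β)^[j] a) := by
      intro j
      rw [lt_iter_smul β _ a hβa j]; infer_instance
    induction j with
    | zero => rfl
    | succ j ih =>
      rw [iterate_succ_apply', ih, iterate_succ_apply']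
      have h1 := hnj j
      have h2 := hnj (j+1)
      rw [iterate_succ_apply'] at h2
      exact StarAlgHomClass.map_cfc β f _ hf.continuousOn (by
        have h := NonUnitalStarAlgHom.norm_apply_le (A := B) (B := B) β
        exact AddMonoidHomClass.continuous_of_bound β 1 (by simpa only [one_mul] using h)) h1 h2
  refine ⟨cfc g a, ?_, ?_, ?_⟩
  · apply cfc_nonneg
    intro z _
    rw [hg]; simp only
    exact_mod_cast Real.rpow_nonneg (ltF_nonneg k z) _
  · intro j hj0 hjk
    rw [hβcfc j g hgc, ← cfc_mul g _ a hgc.continuousOn (by fun_prop)]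
    rw [← cfc_zero ℂ a]
    apply cfc_congr
    intro z hz
    obtain ⟨t, ht, m, hm, rfl⟩ := hsp z hz
    have hr : ltZeta k ^ j * (t * ltZeta k ^ m) = t * ltZeta k ^ (j + m) := by ring
    have hNi : ((N : ℝ)⁻¹) ≠ 0 := by positivity
    simp only [hg, hr, ltF_val k hk t ht, Pi.zero_apply]
    by_cases h0 : m % k = 0
    · rw [Nat.mod_eq_of_lt hm] at h0
      subst h0
      have : ¬ ((j + 0) % k = 0) := by rw [add_zero, Nat.mod_eq_of_lt hjk]; omega
      rw [if_neg this, Real.zero_rpow hNi]; simp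
    · rw [if_neg h0, Real.zero_rpow hNi]; simp
  · have h1 : cfc g a ^ N = cfc (fun z => (ltF k z : ℂ)) a := by
      rw [← cfc_pow g N a hgc.continuousOn]
      exact cfc_congr fun z _ => hgN z
    have hfc : Continuous (fun z => (ltF k z : ℂ)) := Complex.continuous_ofReal.comp (ltF_cont k)
    have hfc' : ∀ j : ℕ, Continuous (fun z => (ltF k (ltZeta k ^ j * z) : ℂ)) := fun j =>
      hfc.comp (continuous_const.mul continuous_id)
    rw [h1]
    have h2 : ∀ j ∈ Finset.range k, ((ltZeta k)⁻¹ ^ j) • (⇑β)^[j] (cfc (fun z => (ltF k z : ℂ)) a)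
        = cfc (fun z => (ltZeta k)⁻¹ ^ j * (ltF k (ltZeta k ^ j * z) : ℂ)) a := by
      intro j _
      rw [hβcfc j _ hfc, cfc_const_mul _ _ a (hfc' j).continuousOn]
    rw [Finset.sum_congr rfl h2, ← cfc_sum
      (fun j z => (ltZeta k)⁻¹ ^ j * (ltF k (ltZeta k ^ j * z) : ℂ)) a (Finset.range k)
      (fun j _ => (continuous_const.mul (hfc' j)).continuousOn)]
    conv_rhs => rw [← cfc_id ℂ a]
    apply cfc_congr
    intro z hz
    obtain ⟨t, ht, m, hm, rfl⟩ := hsp z hz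
    simp only [Finset.sum_apply, id]
    exact ltF_recover k hk t ht m hm

end LTHelpers3

section LTHelpers4
open Function Filter Topology

theorem lt_ker_small {X : Type*} [TopologicalSpace X] [CompactSpace X]
    {A : Type*} [CStarAlgebra A] (ι : C(X, ℂ) →⋆ₐ[ℂ] A)
    (B : X → Type*) [∀ x, CStarAlgebra (B x)]
    (π : ∀ x, A →⋆ₐ[ℂ] B x)
    (hπker : ∀ x, RingHom.ker (π x) =
      (Ideal.span {a : A | ∃ f : C(X, ℂ), f x = 0 ∧ ι f = a}).topologicalClosure)
    (x₀ : X) (b : A) (hb : π x₀ b = 0) : Tendsto (fun x => ‖π x b‖) (𝓝 x₀) (𝓝 0) := by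
  have hle : ∀ x a, ‖π x a‖ ≤ ‖a‖ := fun x a => NonUnitalStarAlgHom.norm_apply_le (π x) a
  have hιf : ∀ x (f : C(X, ℂ)), π x (ι f) = algebraMap ℂ (B x) (f x) := by
    intro x f
    have h1 : ι (f - algebraMap ℂ C(X, ℂ) (f x)) ∈ RingHom.ker (π x) := by
      rw [hπker]
      refine Submodule.le_topologicalClosure _ (Ideal.subset_span ⟨_, ?_, rfl⟩)
      simp
    rw [RingHom.mem_ker] at h1
    rw [map_sub, map_sub, sub_eq_zero] at h1
    rw [h1]
    simp [AlgHomClass.commutes]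
  have hspan : ∀ b ∈ Ideal.span {a : A | ∃ f : C(X, ℂ), f x₀ = 0 ∧ ι f = a},
      Tendsto (fun x => ‖π x b‖) (𝓝 x₀) (𝓝 0) := by
    intro b hb
    induction hb using Submodule.span_induction with
    | mem b hb =>
      obtain ⟨f, hf, rfl⟩ := hb
      have h1 : Tendsto (fun x => ‖f x‖ * ‖(1 : A)‖) (𝓝 x₀) (𝓝 0) := by
        have : Continuous fun x => ‖f x‖ * ‖(1 : A)‖ := by fun_prop
        have := this.tendsto x₀
        simpa [hf] using this
      refine squeeze_zero (fun _ => norm_nonneg _) (fun x => ?_) h1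
      rw [hιf, norm_algebraMap]
      have := hle x 1
      rw [map_one] at this
      gcongr
    | zero => simp
    | add a b _ _ ha hb =>
      refine squeeze_zero (fun _ => norm_nonneg _) (fun x => ?_) (by simpa using ha.add hb)
      rw [map_add]; exact norm_add_le _ _
    | smul a b _ hb =>
      refine squeeze_zero (fun _ => norm_nonneg _) (fun x => ?_) (by simpa using hb.const_mul ‖a‖)
      rw [smul_eq_mul, map_mul]
      exact (norm_mul_le _ _).trans (by gcongr; exact hle x a)
  have hb' : b ∈ RingHom.ker (π x₀) := hb
  rw [hπker] at hb'
  have hb2 : b ∈ closure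
    (Ideal.span {a : A | ∃ f : C(X, ℂ), f x₀ = 0 ∧ ι f = a} : Set A) := hb'
  rw [Metric.tendsto_nhds]
  intro ε hε
  obtain ⟨c, hc, hbc⟩ := Metric.mem_closure_iff.1 hb2 (ε / 2) (by positivity)
  have := (hspan c hc).eventually (gt_mem_nhds (show (0:ℝ) < ε / 2 by positivity))
  filter_upwards [this] with x hx
  rw [dist_zero_right, norm_norm]
  have h1 : π x b = π x (b - c) + π x c := by rw [← map_add]; simp
  rw [h1]
  rw [dist_eq_norm] at hbc
  linarith [norm_add_le (π x (b - c)) (π x c), hle x (b - c)]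

theorem lt_unit_near {X : Type*} [TopologicalSpace X] [CompactSpace X]
    {A : Type*} [CStarAlgebra A] (ι : C(X, ℂ) →⋆ₐ[ℂ] A)
    (B : X → Type*) [∀ x, CStarAlgebra (B x)]
    (π : ∀ x, A →⋆ₐ[ℂ] B x) (hπsurj : ∀ x, Function.Surjective (π x))
    (hπker : ∀ x, RingHom.ker (π x) =
      (Ideal.span {a : A | ∃ f : C(X, ℂ), f x = 0 ∧ ι f = a}).topologicalClosure)
    (x₀ : X) (c : A) (hc : IsSelfAdjoint c) (hu : IsUnit (π x₀ c)) :
    ∀ᶠ x in 𝓝 x₀, IsUnit (π x c) := by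
  obtain ⟨y', hy'⟩ := hu.exists_left_inv
  obtain ⟨y, rfl⟩ := hπsurj x₀ y'
  have h0 : π x₀ (1 - y * c) = 0 := by rw [map_sub, map_mul, hy', map_one, sub_self]
  have := (lt_ker_small ι B π hπker x₀ _ h0).eventually (gt_mem_nhds zero_lt_one)
  filter_upwards [this] with x hx
  have hun : IsUnit (π x y * π x c) := by
    have h1 := (Units.oneSub (π x (1 - y * c)) hx).isUnit
    simpa using h1
  have hun2 := hun.star
  rw [star_mul, (hc.map (π x)).star_eq] at hun2
  obtain ⟨u, hu⟩ := hun.exists_left_inv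
  obtain ⟨v, hv⟩ := hun2.exists_right_inv
  exact isUnit_iff_exists_and_exists.2 ⟨⟨_, by rw [mul_assoc] at hv; exact hv⟩,
    ⟨_, by rw [← mul_assoc] at hu; exact hu⟩⟩

/-- Equivariant lifting of one element. -/
theorem lt_lift_one {A B : Type*} [CStarAlgebra A] [CStarAlgebra B] (π : A →⋆ₐ[ℂ] B)
    (hπ : Surjective π) (m k : ℕ) (hk : k = 2 ^ m)
    (α : A ≃⋆ₐ[ℂ] A) (β : B ≃⋆ₐ[ℂ] B) (hαβ : ∀ a, π (α a) = β (π a))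
    (hα : (⇑α)^[k] = id) (hβ : (⇑β)^[k] = id) (a : B) (ha : IsStarNormal a)
    (hβa : β a = ltZeta k • a)
    (hsp : ∀ z ∈ spectrum ℂ a, ∃ t : ℝ, 0 ≤ t ∧ ∃ m < k, z = t * ltZeta k ^ m) :
    ∃ b : A, π b = a ∧ IsStarNormal b ∧ α b = ltZeta k • b ∧
      ∀ z ∈ spectrum ℂ b, ∃ t : ℝ, 0 ≤ t ∧ ∃ m < k, z = t * ltZeta k ^ m := by
  letI := CStarAlgebra.spectralOrder A
  letI := CStarAlgebra.spectralOrder B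
  have := CStarAlgebra.spectralOrderedRing A
  have := CStarAlgebra.spectralOrderedRing B
  have hk0 : 0 < k := by rw [hk]; positivity
  obtain ⟨s, hs, hso, hsa⟩ := lt_extract k hk0 (3 ^ (m + 1)) (by positivity) β a ha hβa hsp
  obtain ⟨p, hp, hπp, hpo⟩ := lt_lift_top π hπ m α β hαβ (hk ▸ hα) (hk ▸ hβ) s hs (hk ▸ hso)
  rw [← hk] at hpo
  obtain ⟨h1, h2, h3⟩ := lt_assemble k hk0 α hα p
    (fun i hi j hj hij => lt_orth α k hα hk0 p hpo i j
      (by rwa [Nat.mod_eq_of_lt hi, Nat.mod_eq_of_lt hj]))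
    (fun i => lt_iter_nonneg α i p hp)
  refine ⟨_, ?_, h1, h2, h3⟩
  rw [← hsa, map_sum]
  refine Finset.sum_congr rfl fun i _ => ?_
  rw [map_smul, ← hπp, (Semiconj.iterate_right (f := π) (fun a => hαβ a) i) p]

theorem lt_core
    {X : Type*} [TopologicalSpace X] [CompactSpace X]
    {A : Type*} [CStarAlgebra A]
    (m : ℕ) (k : ℕ) (hk : k = 2 ^ m)
    (ι : C(X, ℂ) →⋆ₐ[ℂ] A)
    (α : A ≃⋆ₐ[ℂ] A) (hαk : (⇑α)^[k] = id)
    (B : X → Type*) [∀ x, CStarAlgebra (B x)]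
    (β : ∀ x, B x ≃⋆ₐ[ℂ] B x) (hβk : ∀ x, (⇑(β x))^[k] = id)
    (π : ∀ x, A →⋆ₐ[ℂ] B x)
    (hπsurj : ∀ x, Function.Surjective (π x))
    (hπker : ∀ x, RingHom.ker (π x) =
      (Ideal.span {a : A | ∃ f : C(X, ℂ), f x = 0 ∧ ι f = a}).topologicalClosure)
    (hπequiv : ∀ x (a : A), π x (α a) = β x (π x a)) :
    ∀ n : ℕ, IsOpen {x : X | wdimLT k (β x) ≤ (n : ℕ∞)} := by
  intro n
  rw [isOpen_iff_mem_nhds]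
  intro x₀ hx₀
  have hk0 : 0 < k := by rw [hk]; positivity
  have hmem : ∃ n' : ℕ, n' ≤ n ∧ ∃ a : Fin (n' + 1) → B x₀,
    (∀ i, IsStarNormal (a i)) ∧
    (∀ i, β x₀ (a i) = ltZeta k • a i) ∧
    (∀ i, spectrum ℂ (a i) ⊆ ltAsterisk k) ∧
    IsUnit (∑ i, a i * star (a i)) := by
    have hx₁ : wdimLT k (β x₀) ≤ (n : ℕ∞) := hx₀
    unfold wdimLT at hx₁
    rcases Set.eq_empty_or_nonempty ((fun n : ℕ => (n : ℕ∞)) '' {n : ℕ | ∃ a : Fin (n + 1) → B x₀,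
      (∀ i, IsStarNormal (a i)) ∧
      (∀ i, β x₀ (a i) = ltZeta k • a i) ∧
      (∀ i, spectrum ℂ (a i) ⊆ ltAsterisk k) ∧
      IsUnit (∑ i, a i * star (a i))}) with h | h
    · rw [h] at hx₁; simp at hx₁
    · obtain ⟨n', hn', he⟩ := csInf_mem h
      rw [← he] at hx₁
      exact ⟨n', Nat.cast_le.1 hx₁, hn'⟩
  obtain ⟨n', hn', a, ha1, ha2, ha3, ha4⟩ := hmem
  choose b hb1 hb2 hb3 hb4 using fun i => lt_lift_one (π x₀) (hπsurj x₀) m k hk α (β x₀)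
    (hπequiv x₀) hαk (hβk x₀) (a i) (ha1 i) (ha2 i) (fun z hz => by
      obtain ⟨t, ht, j, hj, h⟩ := ha3 i hz
      exact ⟨t, ht.1, j, hj, h⟩)
  have hsa : IsSelfAdjoint (∑ i, b i * star (b i)) :=
    isSelfAdjoint_sum _ fun i _ => IsSelfAdjoint.mul_star_self (b i)
  have hev := lt_unit_near ι B π hπsurj hπker x₀ _ hsa (by
    simpa only [map_sum, map_mul, map_star, hb1] using ha4)
  filter_upwards [hev] with x hx
  set R : ℝ := 1 + ∑ i, ‖b i‖ * ‖(1 : A)‖ with hR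
  have hRi : ∀ i, ‖b i‖ * ‖(1 : A)‖ ≤ R := fun i => by
    have := Finset.single_le_sum (f := fun i => ‖b i‖ * ‖(1 : A)‖)
      (fun i _ => by positivity) (Finset.mem_univ i)
    linarith
  have hR0 : 0 < R := by positivity
  have hRc : (R : ℂ) ≠ 0 := by exact_mod_cast hR0.ne'
  show wdimLT k (β x) ≤ (n : ℕ∞)
  refine le_trans (sInf_le (Set.mem_image_of_mem _ ?_)) (Nat.cast_le.2 hn')
  have hspec : ∀ i, spectrum ℂ ((R : ℂ)⁻¹ • b i) ⊆ ltAsterisk k := by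
    intro i z hz
    have hz2 : (R : ℂ) * z ∈ spectrum ℂ (b i) := by
      have := (spectrum.smul_mem_smul_iff (r := Units.mk0 (R : ℂ) hRc)).2 hz
      simpa [Units.smul_def, smul_smul, hRc] using this
    obtain ⟨t, ht, j, hj, h⟩ := hb4 i _ hz2
    refine ⟨t / R, ⟨by positivity, ?_⟩, j, hj, ?_⟩
    · rw [div_le_one hR0]
      have h1 := spectrum.norm_le_norm_mul_of_mem hz2
      have hn : ‖ltZeta k‖ = 1 := (lt_zeta_prim k hk0.ne').norm'_eq_one hk0.ne'
      rw [h, norm_mul, norm_pow, hn, one_pow, mul_one, Complex.norm_real,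
        Real.norm_of_nonneg ht] at h1
      exact h1.trans (hRi i)
    · push_cast
      rw [div_mul_eq_mul_div, ← h]; field_simp
  refine ⟨fun i => π x ((R : ℂ)⁻¹ • b i), fun i => ?_, fun i => ?_, fun i => ?_, ?_⟩
  · have := hb2 i
    have h2 : IsStarNormal ((R : ℂ)⁻¹ • b i) := inferInstance
    exact h2.map (π x)
  · rw [← hπequiv, map_smul α, hb3, smul_comm, map_smul (π x)]
  · exact (AlgHom.spectrum_apply_subset (π x) _).trans (hspec i)
  · have h1 : ∑ i, π x ((R : ℂ)⁻¹ • b i) * star (π x ((R : ℂ)⁻¹ • b i))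
        = ((R : ℂ)⁻¹ * star (R : ℂ)⁻¹) • π x (∑ i, b i * star (b i)) := by
      rw [map_sum, Finset.smul_sum]
      refine Finset.sum_congr rfl fun i _ => ?_
      rw [map_smul, star_smul, smul_mul_smul_comm, map_mul, map_star]
    rw [h1]
    have h2 : ((R : ℂ)⁻¹ * star (R : ℂ)⁻¹) ≠ 0 := by simp [hR0.ne']
    exact hx.smul (Units.mk0 _ h2)

end LTHelpers4

/-- Let `k = 2^m` (`m ≥ 1`), `X` a compact Hausdorff space and `A` a
unital `ℤ/k`-`C(X)`-algebra, with fibers `B x = A / J_x` (presented as unital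
C*-algebras with surjective equivariant morphisms `π x : A → B x` whose kernels are the
closed ideals `J_x`).  Then `x ↦ wdim(A_x, ℤ/k)` is upper semicontinuous: each sublevel
set `{x : wdim(A_x, ℤ/k) ≤ n}` is open. -/
theorem stmt1
    {X : Type*} [TopologicalSpace X] [CompactSpace X] [T2Space X]
    {A : Type*} [NormedRing A] [StarRing A] [CStarRing A] [NormedAlgebra ℂ A]
    [CompleteSpace A] [StarModule ℂ A]
    (m : ℕ) (hm : 1 ≤ m) (k : ℕ) (hk : k = 2 ^ m)
    (ι : C(X, ℂ) →⋆ₐ[ℂ] A) (hcentral : ∀ f, ι f ∈ Set.center A)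
    (α : A ≃⋆ₐ[ℂ] A) (hαk : (⇑α)^[k] = id) (hαι : ∀ f, α (ι f) = ι f)
    (B : X → Type*) [∀ x, NormedRing (B x)] [∀ x, StarRing (B x)]
    [∀ x, CStarRing (B x)] [∀ x, NormedAlgebra ℂ (B x)] [∀ x, CompleteSpace (B x)]
    [∀ x, StarModule ℂ (B x)]
    (β : ∀ x, B x ≃⋆ₐ[ℂ] B x) (hβk : ∀ x, (⇑(β x))^[k] = id)
    (π : ∀ x, A →⋆ₐ[ℂ] B x)
    (hπsurj : ∀ x, Function.Surjective (π x))
    (hπker : ∀ x, RingHom.ker (π x) =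
      (Ideal.span {a : A | ∃ f : C(X, ℂ), f x = 0 ∧ ι f = a}).topologicalClosure)
    (hπequiv : ∀ x (a : A), π x (α a) = β x (π x a)) :
    ∀ n : ℕ, IsOpen {x : X | wdimLT k (β x) ≤ (n : ℕ∞)} := by
  letI : CStarAlgebra A := { }
  letI : ∀ x, CStarAlgebra (B x) := fun x => { }
  exact lt_core m k hk ι α hαk B β hβk π hπsurj hπker hπequiv
end

section
/- Let v ∈ M_n(ℂ) be a unitary with v^k = 1 such that every eigenspace E_j = ker(v − ζ^j·1), j ∈ {0,…,k−1}, is nonzero. Then the least cardinality of a family of normal matrices a₁,…,a_N ∈ M_n(ℂ) satisfying v a_i v* = ζ a_i, σ(a_i) ⊆ ✲_k, and Σ_i a_i a_i* invertible, equals ⌈(max_j dim E_j)/(min_j dim E_j)⌉; equivalently, wdim(M_n(ℂ), Ad v) = ⌈(max_j dim E_j)/(min_j dim E_j)⌉ − 1. -/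
/-- Dimension of the `ζ^j`-eigenspace `E_j = ker(v - ζ^j·1)` of a matrix `v`. -/
noncomputable def eigDim (n k : ℕ) (v : Matrix (Fin n) (Fin n) ℂ) (j : ℕ) : ℕ :=
  Module.finrank ℂ ↥(Module.End.eigenspace (Matrix.toLin' v) (ltZeta k ^ j))

/-- `max_j dim E_j`. -/
noncomputable def maxEigDim (n k : ℕ) (v : Matrix (Fin n) (Fin n) ℂ) : ℕ :=
  Finset.univ.sup fun j : Fin k => eigDim n k v (j : ℕ)

/-- `min_j dim E_j`. -/
noncomputable def minEigDim (n k : ℕ) (v : Matrix (Fin n) (Fin n) ℂ) : ℕ :=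
  sInf {d : ℕ | ∃ j : Fin k, d = eigDim n k v (j : ℕ)}

/-- The quotient spread `⌈(max_j dim E_j)/(min_j dim E_j)⌉`. -/
noncomputable def qtMat (n k : ℕ) (v : Matrix (Fin n) (Fin n) ℂ) : ℕ :=
  ⌈(maxEigDim n k v : ℚ) / (minEigDim n k v : ℚ)⌉₊

/-- The weak local-triviality dimension of the `ℤ/k`-action `Ad v` on `M_n(ℂ)`. -/
noncomputable def wdimConj (n k : ℕ) (v : Matrix (Fin n) (Fin n) ℂ) : ℕ∞ :=
  sInf ((fun N : ℕ => (N : ℕ∞)) '' {N : ℕ | ∃ a : Fin (N + 1) → Matrix (Fin n) (Fin n) ℂ,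
    (∀ i, IsStarNormal (a i)) ∧
    (∀ i, v * a i * star v = ltZeta k • a i) ∧
    (∀ i, spectrum ℂ (a i) ⊆ ltAsterisk k) ∧
    IsUnit (∑ i, a i * star (a i))})


open Matrix

theorem ltZeta_prim (k : ℕ) (hk : 0 < k) : IsPrimitiveRoot (ltZeta k) k :=
  Complex.isPrimitiveRoot_exp k hk.ne'

theorem mem_asterisk (k : ℕ) (hk : 0 < k) (z : ℂ) (hz : z ^ (k + 1) = z) : z ∈ ltAsterisk k := by
  by_cases h : z = 0
  · exact ⟨0, by simp, 0, hk, by simp [h]⟩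
  · have hz1 : z ^ k = 1 := by
      rw [pow_succ] at hz
      exact mul_right_cancel₀ h (by simpa using hz)
    have : NeZero k := ⟨hk.ne'⟩
    obtain ⟨m, hm, h⟩ := (ltZeta_prim k hk).eq_pow_of_pow_eq_one hz1
    exact ⟨1, by simp, m, hm, by simp [h]⟩

theorem exists_U (n k : ℕ) (hk : 0 < k) (v : Matrix (Fin n) (Fin n) ℂ)
    (hv : v ∈ unitary (Matrix (Fin n) (Fin n) ℂ)) (hvk : v ^ k = 1) :
    ∃ U : Matrix (Fin n) (Σ j : Fin k, Fin (eigDim n k v (j : ℕ))) ℂ,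
      Uᴴ * U = 1 ∧ U * Uᴴ = 1 ∧
      v * U = U * (diagonal (fun x => ltZeta k ^ (x.1 : ℕ)) :
        Matrix (Σ j : Fin k, Fin (eigDim n k v (j : ℕ))) (Σ j : Fin k, Fin (eigDim n k v (j : ℕ))) ℂ) := by
  classical
  have hprim := ltZeta_prim k hk
  set f : EuclideanSpace ℂ (Fin n) →ₗ[ℂ] EuclideanSpace ℂ (Fin n) := Matrix.toEuclideanLin v
    with hf
  have hfk : f ^ k = 1 := by
    have : f = (Matrix.toLinAlgEquiv (EuclideanSpace.basisFun (Fin n) ℂ).toBasis v) := by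
      rw [hf, Matrix.toEuclideanLin_eq_toLin_orthonormal]; rfl
    rw [this, ← map_pow, hvk, map_one]
  have hiso : ∀ x y, inner ℂ (f x) (f y) = inner ℂ x y := by
    intro x y
    rw [← LinearMap.adjoint_inner_right, hf, ← Matrix.toEuclideanLin_conjTranspose_eq_adjoint]
    congr 1
    have : vᴴ * v = 1 := (Unitary.mem_iff.1 hv).1
    ext i
    simp [Matrix.toLpLin_apply, Matrix.mulVec_mulVec, this]
  let A : Fin k → Submodule ℂ (EuclideanSpace ℂ (Fin n)) :=
    fun j => Module.End.eigenspace f (ltZeta k ^ (j : ℕ))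
  have hnorm : ∀ j : ℕ, (starRingEnd ℂ) (ltZeta k ^ j) * ltZeta k ^ j = 1 := by
    intro j
    rw [← Complex.normSq_eq_conj_mul_self, Complex.normSq_eq_norm_sq,
      norm_pow, hprim.norm'_eq_one hk.ne']
    simp
  have hdim : ∀ j, Module.finrank ℂ (A j) = eigDim n k v j := by
    intro j
    unfold eigDim
    have : A j = (Module.End.eigenspace (Matrix.toLin' v) (ltZeta k ^ (j:ℕ))).map
        ((WithLp.linearEquiv 2 ℂ (Fin n → ℂ)).symm.toLinearMap) := by
      ext x
      rw [Submodule.mem_map_equiv]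
      simp only [A, Module.End.mem_eigenspace_iff, hf]
      constructor
      · intro h
        have := congrArg (WithLp.linearEquiv 2 ℂ (Fin n → ℂ)) h
        simpa using this
      · intro h
        apply (WithLp.linearEquiv 2 ℂ (Fin n → ℂ)).injective
        simpa using h
    rw [this]
    exact LinearEquiv.finrank_map_eq _ _
  have horth : OrthogonalFamily ℂ (fun i => A i) fun i => (A i).subtypeₗᵢ := by
    intro i j hij x y
    have hx := Module.End.mem_eigenspace_iff.1 x.2
    have hy := Module.End.mem_eigenspace_iff.1 y.2
    have := hiso x y
    rw [hx, hy, inner_smul_left, inner_smul_right, ← mul_assoc] at this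
    by_contra hne
    have h1 : (starRingEnd ℂ) (ltZeta k ^ (i:ℕ)) * ltZeta k ^ (j:ℕ) = 1 :=
      mul_right_cancel₀ (b := inner ℂ (x : EuclideanSpace ℂ (Fin n)) y) hne (by simpa using this)
    have h2 := h1.trans (hnorm i).symm
    have h3 := mul_left_cancel₀ (left_ne_zero_of_mul_eq_one h1) h2
    exact hij (Fin.ext (hprim.pow_inj i.2 j.2 h3.symm))
  have htop : iSup A = ⊤ := by
    have hss : Module.End.IsSemisimple f := by
      apply Module.End.isSemisimple_of_squarefree_aeval_eq_zero (p := Polynomial.X ^ k - 1)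
      · apply Polynomial.Separable.squarefree
        have := Polynomial.separable_X_pow_sub_C (F := ℂ) (n := k) 1
          (by exact_mod_cast hk.ne') one_ne_zero
        simpa using this
      · simp [hfk]
    rw [eq_top_iff, ← Module.End.iSup_maxGenEigenspace_eq_top f]
    apply iSup_le
    intro μ
    rw [hss.isFinitelySemisimple.maxGenEigenspace_eq_eigenspace]
    intro x hx
    by_cases h0 : x = 0
    · simp [h0]
    have hev : ∀ s : ℕ, (f ^ s) x = μ ^ s • x := by
      intro s
      induction s with
      | zero => simp
      | succ s ih =>
        rw [pow_succ', Module.End.mul_apply, ih, map_smul, Module.End.mem_eigenspace_iff.1 hx,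
          smul_smul, pow_succ]
    have h1 := hev k
    rw [hfk] at h1
    have h2 : μ ^ k = 1 := by
      have : (1 - μ ^ k) • x = 0 := by rw [sub_smul, ← h1]; simp
      rcases smul_eq_zero.1 this with h | h
      · exact (sub_eq_zero.1 h).symm
      · exact absurd h h0
    have : NeZero k := ⟨hk.ne'⟩
    obtain ⟨m, hm, rfl⟩ := hprim.eq_pow_of_pow_eq_one h2
    exact Submodule.mem_iSup_of_mem (⟨m, hm⟩ : Fin k) hx
  have hint : DirectSum.IsInternal A := by
    rw [horth.isInternal_iff, htop]; simp
  let b := hint.collectedOrthonormalBasis horth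
    (fun j => (stdOrthonormalBasis ℂ (A j)).reindex (finCongr (hdim j)))
  have hb : ∀ x, f (b x) = ltZeta k ^ (x.1 : ℕ) • b x := fun x =>
    Module.End.mem_eigenspace_iff.1 (hint.collectedOrthonormalBasis_mem horth _ x)
  refine ⟨Matrix.of fun i x => b x i, ?_, ?_, ?_⟩
  · ext x y
    have := (orthonormal_iff_ite.1 b.orthonormal) x y
    rw [Matrix.one_apply, ← this]
    simp [Matrix.mul_apply, PiLp.inner_apply, mul_comm]
  · ext i j
    have := b.sum_inner_mul_inner (EuclideanSpace.single i 1) (EuclideanSpace.single j 1)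
    rw [EuclideanSpace.inner_single_left] at this
    simp only [Matrix.mul_apply, Matrix.one_apply]
    simpa [EuclideanSpace.inner_single_left, EuclideanSpace.inner_single_right] using this
  · ext i x
    have := congrArg (fun w : EuclideanSpace ℂ (Fin n) => w i) (hb x)
    simp only [hf, Matrix.toLpLin_apply] at this
    rw [Matrix.mul_diagonal]
    simpa [Matrix.mulVec, dotProduct, Matrix.mul_apply, mul_comm] using this

theorem upper_single (n k m : ℕ) [NeZero k] (v : Matrix (Fin n) (Fin n) ℂ)
    (hv : v ∈ unitary (Matrix (Fin n) (Fin n) ℂ))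
    (W : Matrix (Fin n) (Fin k × Fin m) ℂ) (hW : Wᴴ * W = 1)
    (hvW : v * W = W * (diagonal (fun x => ltZeta k ^ (x.1 : ℕ)) :
      Matrix (Fin k × Fin m) (Fin k × Fin m) ℂ)) :
    ∃ a : Matrix (Fin n) (Fin n) ℂ, IsStarNormal a ∧ v * a * star v = ltZeta k • a ∧
      spectrum ℂ a ⊆ ltAsterisk k ∧ a * star a = W * Wᴴ := by
  have hk : 0 < k := Nat.pos_of_ne_zero (NeZero.ne k)
  have hprim := ltZeta_prim k hk
  let e : Equiv.Perm (Fin k × Fin m) := Equiv.prodCongr (Equiv.addRight (-1)) (Equiv.refl _)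
  let T : Matrix (Fin k × Fin m) (Fin k × Fin m) ℂ := e.permMatrix ℂ
  have hT1 : T * Tᴴ = 1 := by
    simp only [T, conjTranspose_permMatrix]
    rw [← permMatrix_mul]; simp
  have hT2 : Tᴴ * T = 1 := by
    simp only [T, conjTranspose_permMatrix]
    rw [← permMatrix_mul]; simp
  have hpow : ∀ s : ℕ, T ^ s = (e ^ s).permMatrix ℂ := by
    intro s
    induction s with
    | zero => simp
    | succ s ih => rw [pow_succ, ih, pow_succ', permMatrix_mul]
  have hes : ∀ s : ℕ, ∀ x, (e ^ s) x = (x.1 + s • (-1), x.2) := by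
    intro s
    induction s with
    | zero => simp
    | succ s ih =>
      intro x
      rw [pow_succ', Equiv.Perm.mul_apply, ih, succ_nsmul]
      simp [e, add_assoc]
  have hek : e ^ k = 1 := by
    ext1 x
    rw [hes]
    have : k • (-1 : Fin k) = 0 := by
      have := card_nsmul_eq_zero' (G := Fin k) (x := -1)
      simpa using this
    simp [this]
  have hTk : T ^ (k + 1) = T := by
    rw [hpow, pow_succ, hek, one_mul]
  let D : Matrix (Fin k × Fin m) (Fin k × Fin m) ℂ := diagonal (fun x => ltZeta k ^ (x.1 : ℕ))
  change v * W = W * D at hvW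
  have hDT : D * T
      = ltZeta k • (T * D) := by
    ext x y
    simp only [D]
    rw [Matrix.diagonal_mul, Matrix.smul_apply, Matrix.mul_diagonal]
    simp only [T, Equiv.Perm.permMatrix, PEquiv.toMatrix_apply, Equiv.toPEquiv_apply,
      Option.mem_some_iff, smul_eq_mul]
    split_ifs with h
    · have h1 : x.1 = y.1 + 1 := by
        rw [← h]; simp [e]
      rw [mul_one, one_mul, ← pow_succ', h1, Fin.val_add]
      rw [Fin.val_one', Nat.add_mod_mod]
      conv_rhs => rw [← Nat.mod_add_div (y.1 + 1 : ℕ) k, pow_add, pow_mul, hprim.pow_eq_one,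
        one_pow, mul_one]
    · simp
  have hWv : v * star v = 1 := (Unitary.mem_iff.1 hv).2
  have hvs : star v * v = 1 := (Unitary.mem_iff.1 hv).1
  let a := W * T * Wᴴ
  have hsa : star a = W * Tᴴ * Wᴴ := by
    simp [a, star_eq_conjTranspose, conjTranspose_mul, Matrix.mul_assoc]
  have hmul : ∀ X Y : Matrix (Fin k × Fin m) (Fin k × Fin m) ℂ,
      (W * X * Wᴴ) * (W * Y * Wᴴ) = W * (X * Y) * Wᴴ := by
    intro X Y
    calc _ = W * X * (Wᴴ * W) * Y * Wᴴ := by simp only [Matrix.mul_assoc]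
      _ = _ := by rw [hW]; simp only [Matrix.mul_assoc, Matrix.mul_one]
  have haa : a * star a = W * Wᴴ := by
    rw [hsa, hmul, hT1, Matrix.mul_one]
  have haa' : star a * a = W * Wᴴ := by
    rw [hsa, hmul, hT2, Matrix.mul_one]
  have hapow : ∀ s : ℕ, a ^ (s + 1) = W * T ^ (s + 1) * Wᴴ := by
    intro s
    induction s with
    | zero => simp [a]
    | succ s ih => rw [pow_succ, ih, hmul, ← pow_succ]
  refine ⟨a, ⟨?_⟩, ?_, ?_, haa⟩
  · rw [Commute, SemiconjBy, haa, haa']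
  · have hva : v * a = ltZeta k • (a * v) := by
      have h1 : Wᴴ * v = D * Wᴴ := by
        have h2 := congrArg (fun M => Mᴴ) hvW
        simp only [conjTranspose_mul] at h2
        rw [← star_eq_conjTranspose v] at h2
        have hD : D *
            (D)ᴴ = 1 := by
          simp only [D]
          rw [diagonal_conjTranspose, diagonal_mul_diagonal, ← diagonal_one]
          congr 1
          ext x
          have : (ltZeta k ^ (x.1:ℕ)) * (starRingEnd ℂ) (ltZeta k ^ (x.1:ℕ)) = 1 := by
            rw [mul_comm, ← Complex.normSq_eq_conj_mul_self, Complex.normSq_eq_norm_sq,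
              norm_pow, hprim.norm'_eq_one hk.ne']
            simp
          simpa using this
        calc Wᴴ * v = (D *
            (D)ᴴ) * Wᴴ * v := by
              rw [hD, Matrix.one_mul]
          _ = D *
              (Wᴴ * star v) * v := by rw [h2]; simp only [Matrix.mul_assoc]
          _ = _ := by simp only [Matrix.mul_assoc, hvs, Matrix.mul_one]
      calc v * a = (v * W) * T * Wᴴ := by simp only [a, Matrix.mul_assoc]
        _ = W * (D * T) * Wᴴ := by
          rw [hvW]; simp only [Matrix.mul_assoc]
        _ = ltZeta k • (W * T * (D * Wᴴ)) := by
          rw [hDT]; simp only [Matrix.mul_assoc, Matrix.mul_smul, Matrix.smul_mul]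
        _ = _ := by rw [← h1]; simp only [a, Matrix.mul_assoc]
    rw [hva, Matrix.smul_mul, Matrix.mul_assoc, hWv, Matrix.mul_one]
  · intro z hz
    apply mem_asterisk k hk
    have hak : a ^ (k + 1) = a := by rw [hapow, hTk]
    have := spectrum.subset_polynomial_aeval (𝕜 := ℂ) a (Polynomial.X ^ (k + 1) - Polynomial.X)
      ⟨z, hz, rfl⟩
    simp only [map_sub, map_pow, Polynomial.aeval_X, hak, sub_self, Polynomial.eval_sub,
      Polynomial.eval_pow, Polynomial.eval_X] at this
    rcases isEmpty_or_nonempty (Fin n) with hn | hn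
    · simp [spectrum.of_subsingleton] at this
    · rw [spectrum.zero_eq] at this
      exact sub_eq_zero.1 this

theorem upper (n k m N : ℕ) [NeZero k] (v : Matrix (Fin n) (Fin n) ℂ)
    (hv : v ∈ unitary (Matrix (Fin n) (Fin n) ℂ)) (hvk : v ^ k = 1) (hm : 0 < m)
    (hmin : ∀ j : Fin k, m ≤ eigDim n k v j) (hmax : ∀ j : Fin k, eigDim n k v j ≤ N * m) :
    ∃ a : Fin N → Matrix (Fin n) (Fin n) ℂ,
        (∀ i, IsStarNormal (a i)) ∧
        (∀ i, v * a i * star v = ltZeta k • a i) ∧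
        (∀ i, spectrum ℂ (a i) ⊆ ltAsterisk k) ∧
        IsUnit (∑ i, a i * star (a i)) := by
  have hk : 0 < k := Nat.pos_of_ne_zero (NeZero.ne k)
  obtain ⟨U, hU1, hU2, hU3⟩ := exists_U n k hk v hv hvk
  let g : Fin N → Fin k × Fin m → (Σ j : Fin k, Fin (eigDim n k v (j : ℕ))) := fun i p =>
    ⟨p.1, ⟨min (i * m) (eigDim n k v p.1 - m) + p.2, by
      have := p.2.2; have := hmin p.1; omega⟩⟩
  have hg : ∀ i, Function.Injective (g i) := by
    rintro i ⟨j, s⟩ ⟨j', s'⟩ h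
    simp only [g, Sigma.mk.injEq] at h
    obtain ⟨rfl, h⟩ := h
    have := Fin.mk.inj (eq_of_heq h)
    simp only [Prod.mk.injEq, true_and]
    ext
    omega
  have hcov : ∀ x, ∃ i p, x = g i p := by
    rintro ⟨j, s, hs⟩
    have h1 := hmin j
    have h2 := hmax j
    have h3 : s / m * m ≤ s := Nat.div_mul_le_self s m
    have h4 : s < s / m * m + m := by
      have := Nat.lt_div_mul_add (a := s) hm
      exact this
    refine ⟨⟨s / m, (Nat.div_lt_iff_lt_mul hm).2 (by omega)⟩,
      (j, ⟨s - min (s / m * m) (eigDim n k v j - m), by omega⟩), ?_⟩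
    simp only [g]
    congr 2
    omega
  let S : Fin N → Matrix (Σ j : Fin k, Fin (eigDim n k v (j : ℕ))) (Fin k × Fin m) ℂ :=
    fun i => Matrix.of fun x p => if x = g i p then 1 else 0
  have hS1 : ∀ i, (S i)ᴴ * S i = 1 := by
    intro i
    ext p q
    simp [Matrix.mul_apply, S, Matrix.one_apply, (hg i).eq_iff, eq_comm]
  have hS2 : ∀ i, S i * (S i)ᴴ = diagonal (fun x => ∑ p, if x = g i p then (1:ℂ) else 0) := by
    intro i
    ext x y
    rw [Matrix.mul_apply, Matrix.diagonal_apply]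
    split_ifs with h
    · subst h
      refine Finset.sum_congr rfl fun p _ => ?_
      simp only [S, Matrix.of_apply, conjTranspose_apply]
      split_ifs <;> simp
    · apply Finset.sum_eq_zero
      intro p _
      simp only [S, Matrix.of_apply, conjTranspose_apply]
      split_ifs with h1 h2
      · exact absurd (h1.trans h2.symm) h
      all_goals simp
  have hS3 : ∀ i, diagonal (fun x : (Σ j : Fin k, Fin (eigDim n k v (j : ℕ))) =>
      ltZeta k ^ (x.1 : ℕ)) * S i = S i * (diagonal (fun x => ltZeta k ^ (x.1 : ℕ)) :
      Matrix (Fin k × Fin m) (Fin k × Fin m) ℂ) := by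
    intro i
    ext x p
    rw [Matrix.diagonal_mul, Matrix.mul_diagonal]
    simp only [S, Matrix.of_apply]
    split_ifs with h
    · subst h; simp [g]
    · simp
  have hex := fun i => upper_single n k m v hv (U * S i)
    (by rw [conjTranspose_mul, Matrix.mul_assoc, ← Matrix.mul_assoc Uᴴ, hU1, Matrix.one_mul, hS1])
    (by rw [← Matrix.mul_assoc, hU3, Matrix.mul_assoc, hS3, Matrix.mul_assoc])
  choose a ha1 ha2 ha3 ha4 using hex
  refine ⟨a, ha1, ha2, ha3, ?_⟩
  have hsum : ∑ i, a i * star (a i) = U * diagonal (fun x => ∑ i, ∑ p, if x = g i p then (1:ℂ) else 0) * Uᴴ := by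
    have : diagonal (fun x => ∑ i, ∑ p, if x = g i p then (1:ℂ) else 0) = ∑ i, S i * (S i)ᴴ := by
      simp_rw [hS2]
      ext x y
      rw [Matrix.sum_apply]
      simp only [Matrix.diagonal_apply]
      split_ifs <;> simp
    rw [this, Matrix.mul_sum, Matrix.sum_mul]
    refine Finset.sum_congr rfl fun i _ => ?_
    rw [ha4, conjTranspose_mul]
    simp only [Matrix.mul_assoc]
  have hne : ∀ x, (∑ i, ∑ p, if x = g i p then (1:ℂ) else 0) ≠ 0 := by
    intro x
    obtain ⟨i, p, h⟩ := hcov x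
    have : (∑ i, ∑ p, if x = g i p then (1:ℂ) else 0)
      = ((∑ i, ∑ p, if x = g i p then 1 else 0 : ℕ) : ℂ) := by push_cast; rfl
    rw [this]
    norm_cast
    intro h0
    rw [Finset.sum_eq_zero_iff] at h0
    have h1 := h0 i (Finset.mem_univ _)
    rw [Finset.sum_eq_zero_iff] at h1
    have h2 := h1 p (Finset.mem_univ _)
    simp [h] at h2
  rw [hsum]
  refine IsUnit.of_mul_eq_one (U * diagonal (fun x => (∑ i, ∑ p, if x = g i p then (1:ℂ) else 0)⁻¹) * Uᴴ) ?_
  set d : (Σ j : Fin k, Fin (eigDim n k v (j : ℕ))) → ℂ :=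
    fun x => ∑ i, ∑ p, if x = g i p then (1:ℂ) else 0 with hd
  calc U * diagonal d * Uᴴ * (U * diagonal (fun x => (d x)⁻¹) * Uᴴ)
      = U * diagonal d * (Uᴴ * U) * diagonal (fun x => (d x)⁻¹) * Uᴴ := by
        simp only [Matrix.mul_assoc]
    _ = U * (diagonal d * diagonal (fun x => (d x)⁻¹)) * Uᴴ := by
        rw [hU1]; simp only [Matrix.mul_assoc, Matrix.one_mul]
    _ = 1 := by
        rw [diagonal_mul_diagonal]
        have : (fun x => d x * (d x)⁻¹) = fun _ => 1 := by
          ext x; exact mul_inv_cancel₀ (hne x)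
        rw [this, diagonal_one, Matrix.mul_one, hU2]

theorem exists_P (n k : ℕ) [NeZero k] (v : Matrix (Fin n) (Fin n) ℂ)
    (hv : v ∈ unitary (Matrix (Fin n) (Fin n) ℂ)) (hvk : v ^ k = 1) :
    ∃ P : Fin k → Matrix (Fin n) (Fin n) ℂ, (∀ j, (P j)ᴴ = P j) ∧ (∀ j, P j * P j = P j) ∧
      (∀ j, (P j).rank = eigDim n k v j) ∧
      ∀ a : Matrix (Fin n) (Fin n) ℂ, v * a * star v = ltZeta k • a →
        ∀ j, a * P j = P (j + 1) * a := by
  have hk : 0 < k := Nat.pos_of_ne_zero (NeZero.ne k)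
  have hprim := ltZeta_prim k hk
  obtain ⟨U, hU1, hU2, hU3⟩ := exists_U n k hk v hv hvk
  let J : Fin k → Matrix (Σ j : Fin k, Fin (eigDim n k v (j : ℕ)))
    (Σ j : Fin k, Fin (eigDim n k v (j : ℕ))) ℂ :=
    fun j => diagonal (fun x => if x.1 = j then 1 else 0)
  have hJJ : ∀ j, J j * J j = J j := by
    intro j
    simp only [J]
    rw [diagonal_mul_diagonal]
    congr 1
    ext x
    split_ifs <;> simp
  have hJr : ∀ j, (J j).rank = eigDim n k v j := by
    intro j
    simp only [J]
    classical
    rw [Matrix.rank_diagonal]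
    rw [← Fintype.card_fin (eigDim n k v j)]
    symm
    refine Fintype.card_congr (Equiv.ofBijective
      (fun s => ⟨⟨j, s⟩, by simp⟩) ⟨?_, ?_⟩)
    · intro s t h
      simpa using h
    · rintro ⟨⟨j', s⟩, h⟩
      have : j' = j := by
        by_contra hne
        simp [hne] at h
      subst this
      exact ⟨s, rfl⟩
  have hcan : ∀ X : Matrix (Σ j : Fin k, Fin (eigDim n k v (j : ℕ)))
      (Σ j : Fin k, Fin (eigDim n k v (j : ℕ))) ℂ, Uᴴ * (U * X * Uᴴ) * U = X := by
    intro X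
    calc _ = (Uᴴ * U) * X * (Uᴴ * U) := by simp only [Matrix.mul_assoc]
      _ = X := by rw [hU1, Matrix.mul_one, Matrix.one_mul]
  refine ⟨fun j => U * J j * Uᴴ, ?_, ?_, ?_, ?_⟩
  · intro j
    have : (J j)ᴴ = J j := by
      simp only [J]
      rw [diagonal_conjTranspose]
      congr 1
      ext x
      by_cases h : x.1 = j <;> simp [h]
    simp only [conjTranspose_mul, conjTranspose_conjTranspose, this, Matrix.mul_assoc]
  · intro j
    calc _ = U * (J j * (Uᴴ * U) * J j) * Uᴴ := by simp only [Matrix.mul_assoc]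
      _ = _ := by rw [hU1, Matrix.mul_one, hJJ]
  · intro j
    rw [← hJr j]
    apply le_antisymm
    · exact (Matrix.rank_mul_le_left _ _).trans (Matrix.rank_mul_le_right _ _)
    · conv_lhs => rw [← hcan (J j)]
      exact (Matrix.rank_mul_le_left _ _).trans (Matrix.rank_mul_le_right _ _)
  · intro a ha j
    have hvs : star v * v = 1 := (Unitary.mem_iff.1 hv).1
    have hva : v * a = ltZeta k • (a * v) := by
      rw [← Matrix.smul_mul, ← ha, Matrix.mul_assoc, hvs, Matrix.mul_one]
    let A := Uᴴ * a * U
    let D : Matrix (Σ j : Fin k, Fin (eigDim n k v (j : ℕ)))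
      (Σ j : Fin k, Fin (eigDim n k v (j : ℕ))) ℂ := diagonal (fun x => ltZeta k ^ (x.1 : ℕ))
    change v * U = U * D at hU3
    have hUv : Uᴴ * v = D * Uᴴ := by
      calc Uᴴ * v = Uᴴ * v * (U * Uᴴ) := by rw [hU2, Matrix.mul_one]
        _ = Uᴴ * (v * U) * Uᴴ := by simp only [Matrix.mul_assoc]
        _ = (Uᴴ * U) * D * Uᴴ := by rw [hU3]; simp only [Matrix.mul_assoc]
        _ = _ := by rw [hU1, Matrix.one_mul]
    have hDA : D * A = ltZeta k • (A * D) := by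
      calc D * A = (D * Uᴴ) * a * U := by simp only [A, Matrix.mul_assoc]
        _ = Uᴴ * (v * a) * U := by rw [← hUv]; simp only [Matrix.mul_assoc]
        _ = ltZeta k • (Uᴴ * a * (v * U)) := by
          rw [hva]; simp only [Matrix.mul_assoc, Matrix.mul_smul, Matrix.smul_mul]
        _ = _ := by rw [hU3]; simp only [A, Matrix.mul_assoc]
    have hAJ : A * J j = J (j + 1) * A := by
      ext x y
      have h1 := congrFun (congrFun hDA x) y
      simp only [D, J] at h1 ⊢
      rw [Matrix.diagonal_mul, Matrix.smul_apply, Matrix.mul_diagonal] at h1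
      rw [Matrix.diagonal_mul, Matrix.mul_diagonal]
      by_cases h0 : A x y = 0
      · simp [h0]
      have h2 : ltZeta k ^ (x.1 : ℕ) = ltZeta k ^ ((y.1 : ℕ) + 1) := by
        apply mul_right_cancel₀ h0
        rw [h1, smul_eq_mul, pow_succ]; ring
      have h3 : x.1 = y.1 + 1 := by
        ext
        rw [Fin.val_add, Fin.val_one', Nat.add_mod_mod]
        apply hprim.pow_inj x.1.2 (Nat.mod_lt _ hk)
        rw [h2]
        conv_lhs => rw [← Nat.mod_add_div (y.1 + 1 : ℕ) k, pow_add, pow_mul, hprim.pow_eq_one,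
          one_pow, mul_one]
      rw [h3]
      simp
    calc a * (U * J j * Uᴴ) = (U * Uᴴ) * a * (U * J j * Uᴴ) := by rw [hU2, Matrix.one_mul]
      _ = U * (A * J j) * Uᴴ := by simp only [A, Matrix.mul_assoc]
      _ = U * J (j + 1) * Uᴴ * a * (U * Uᴴ) := by rw [hAJ]; simp only [A, Matrix.mul_assoc]
      _ = _ := by rw [hU2, Matrix.mul_one]

theorem rank_add_le_aux {n : ℕ} (A B : Matrix (Fin n) (Fin n) ℂ) :
    (A + B).rank ≤ A.rank + B.rank := by
  unfold Matrix.rank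
  rw [Matrix.mulVecLin_add]
  exact (Submodule.finrank_mono (LinearMap.range_add_le _ _)).trans
    (Submodule.finrank_add_le_finrank_add_finrank _ _)

theorem rank_sum_le_aux {n : ℕ} {ι : Type*} (s : Finset ι) (A : ι → Matrix (Fin n) (Fin n) ℂ) :
    (∑ i ∈ s, A i).rank ≤ ∑ i ∈ s, (A i).rank := by
  classical
  induction s using Finset.induction_on with
  | empty => simp
  | insert i s hi ih =>
    rw [Finset.sum_insert hi, Finset.sum_insert hi]
    exact (rank_add_le_aux _ _).trans (by omega)

open scoped ComplexOrder in
theorem lower (n k N : ℕ) [NeZero k] (v : Matrix (Fin n) (Fin n) ℂ)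
    (hv : v ∈ unitary (Matrix (Fin n) (Fin n) ℂ)) (hvk : v ^ k = 1)
    (a : Fin N → Matrix (Fin n) (Fin n) ℂ) (h1 : ∀ i, IsStarNormal (a i))
    (h2 : ∀ i, v * a i * star v = ltZeta k • a i)
    (h3 : IsUnit (∑ i, a i * star (a i))) (j j' : Fin k) :
    eigDim n k v j ≤ N * eigDim n k v j' := by
  obtain ⟨P, hP1, hP2, hP3, hP4⟩ := exists_P n k v hv hvk
  have key : ∀ i (j : Fin k), (P (j + 1) * (a i * star (a i))).rank = (a i * P j).rank ∧
      (P j * (a i * star (a i))).rank = (a i * P j).rank := by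
    intro i j
    have hc := hP4 (a i) (h2 i) j
    have hcs : star (a i) * P (j + 1) = P j * star (a i) := by
      have := congrArg (fun M => Mᴴ) hc
      simp only [conjTranspose_mul, hP1] at this
      exact this.symm
    constructor
    · rw [← Matrix.rank_self_mul_conjTranspose (a i * P j)]
      congr 1
      rw [conjTranspose_mul, hP1, ← Matrix.mul_assoc, ← hc, star_eq_conjTranspose]
      rw [← Matrix.mul_assoc (a i * P j), Matrix.mul_assoc (a i) (P j) (P j), hP2]
    · have hn : a i * star (a i) = star (a i) * a i := (h1 i).star_comm_self.symm
      rw [← Matrix.rank_conjTranspose_mul_self (a i * P j), hn]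
      congr 1
      rw [conjTranspose_mul, hP1, ← star_eq_conjTranspose]
      calc P j * (star (a i) * a i) = star (a i) * (P (j + 1) * a i) := by
            rw [← Matrix.mul_assoc, ← hcs, Matrix.mul_assoc]
        _ = star (a i) * (P (j + 1) * (P (j + 1) * a i)) := by
            rw [← Matrix.mul_assoc (P (j+1)), hP2]
        _ = (star (a i) * P (j + 1)) * (P (j + 1) * a i) := by simp only [Matrix.mul_assoc]
        _ = _ := by rw [hcs, hc]
  have hconst : ∀ i (j : Fin k), (P j * (a i * star (a i))).rank
      = (P 0 * (a i * star (a i))).rank := by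
    intro i j
    have : ∀ s : ℕ, (P (s • (1 : Fin k)) * (a i * star (a i))).rank
        = (P 0 * (a i * star (a i))).rank := by
      intro s
      induction s with
      | zero => simp
      | succ s ih => rw [succ_nsmul, (key i _).1, ← (key i _).2, ih]
    have h := this j
    have hj : (j : ℕ) • (1 : Fin k) = j := by
      have hs : ∀ s : ℕ, ((s • (1 : Fin k) : Fin k) : ℕ) = s % k := by
        intro s
        induction s with
        | zero => simp
        | succ s ih => rw [succ_nsmul, Fin.val_add, ih, Fin.val_one', ← Nat.add_mod]
      ext
      rw [hs, Nat.mod_eq_of_lt j.2]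
    rwa [hj] at h
  have hle : ∀ i, (P j * (a i * star (a i))).rank ≤ eigDim n k v j' := by
    intro i
    rw [hconst i j, ← hconst i j', ← hP3]
    exact Matrix.rank_mul_le_left _ _
  calc eigDim n k v j = (P j * ∑ i, a i * star (a i)).rank := by
        rw [Matrix.rank_mul_eq_left_of_isUnit_det _ _ ((Matrix.isUnit_iff_isUnit_det _).1 h3), hP3]
    _ ≤ ∑ i, (P j * (a i * star (a i))).rank := by
        rw [Matrix.mul_sum]; exact rank_sum_le_aux _ _
    _ ≤ ∑ _i : Fin N, eigDim n k v j' := Finset.sum_le_sum fun i _ => hle i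
    _ = _ := by simp

/-- For a unitary `v ∈ M_n(ℂ)` with `v^k = 1` and all eigenspaces
`E_j = ker(v - ζ^j)` nonzero, the least cardinality of a family of normal matrices
`a₁, …, a_N` with `v aᵢ v* = ζ aᵢ`, `σ(aᵢ) ⊆ ✲_k` and `Σ aᵢ aᵢ*` invertible equals
`⌈(max_j dim E_j)/(min_j dim E_j)⌉`; equivalently,
`wdim(M_n(ℂ), Ad v) = ⌈max/min⌉ - 1`. -/
theorem stmt2 (n k : ℕ) (hk : 0 < k) (v : Matrix (Fin n) (Fin n) ℂ)
    (hv : v ∈ unitary (Matrix (Fin n) (Fin n) ℂ)) (hvk : v ^ k = 1)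
    (hfull : ∀ j : Fin k,
      Module.End.eigenspace (Matrix.toLin' v) (ltZeta k ^ (j : ℕ)) ≠ ⊥) :
    IsLeast {N : ℕ | ∃ a : Fin N → Matrix (Fin n) (Fin n) ℂ,
        (∀ i, IsStarNormal (a i)) ∧
        (∀ i, v * a i * star v = ltZeta k • a i) ∧
        (∀ i, spectrum ℂ (a i) ⊆ ltAsterisk k) ∧
        IsUnit (∑ i, a i * star (a i))}
      (qtMat n k v)
    ∧ wdimConj n k v = (qtMat n k v : ℕ∞) - 1 := by
  have : NeZero k := ⟨hk.ne'⟩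
  have hpos : ∀ j : Fin k, 0 < eigDim n k v j := by
    intro j
    have := hfull j
    unfold eigDim
    rw [Nat.pos_iff_ne_zero]
    intro h
    exact this (Submodule.finrank_eq_zero.1 h)
  have hne : {d : ℕ | ∃ j : Fin k, d = eigDim n k v (j : ℕ)}.Nonempty := ⟨_, 0, rfl⟩
  obtain ⟨j0, hj0⟩ := Nat.sInf_mem hne
  have hj0' : minEigDim n k v = eigDim n k v j0 := hj0
  have hmin : ∀ j : Fin k, minEigDim n k v ≤ eigDim n k v j := fun j => Nat.sInf_le ⟨j, rfl⟩
  have hmax : ∀ j : Fin k, eigDim n k v j ≤ maxEigDim n k v := fun j =>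
    Finset.le_sup (f := fun j : Fin k => eigDim n k v (j : ℕ)) (Finset.mem_univ j)
  have hmpos : 0 < minEigDim n k v := hj0' ▸ hpos j0
  have hq : ∀ N, qtMat n k v ≤ N ↔ maxEigDim n k v ≤ N * minEigDim n k v := by
    intro N
    unfold qtMat
    rw [Nat.ceil_le, div_le_iff₀ (by exact_mod_cast hmpos)]
    norm_cast
  have hleast : IsLeast {N : ℕ | ∃ a : Fin N → Matrix (Fin n) (Fin n) ℂ,
        (∀ i, IsStarNormal (a i)) ∧
        (∀ i, v * a i * star v = ltZeta k • a i) ∧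
        (∀ i, spectrum ℂ (a i) ⊆ ltAsterisk k) ∧
        IsUnit (∑ i, a i * star (a i))}
      (qtMat n k v) := by
    constructor
    · exact upper n k (minEigDim n k v) _ v hv hvk hmpos hmin
        fun j => (hmax j).trans ((hq _).1 le_rfl)
    · rintro N ⟨a, h1, h2, _, h3⟩
      rw [hq]
      apply Finset.sup_le
      intro j _
      rw [hj0']
      exact lower n k N v hv hvk a h1 h2 h3 j j0
  refine ⟨hleast, ?_⟩
  have hq1 : 1 ≤ qtMat n k v := by
    by_contra h
    have h1 := (hq 0).1 (by omega)
    have h2 := hmax j0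
    have h3 := hpos j0
    omega
  obtain ⟨q, hqq⟩ : ∃ q, qtMat n k v = q + 1 := ⟨qtMat n k v - 1, by omega⟩
  rw [hqq] at hleast ⊢
  have hR : ((q + 1 : ℕ) : ℕ∞) - 1 = (q : ℕ∞) := by norm_cast
  rw [hR]
  unfold wdimConj
  apply le_antisymm
  · exact sInf_le ⟨q, hleast.1, rfl⟩
  · apply le_sInf
    rintro _ ⟨N, hN, rfl⟩
    have := hleast.2 hN
    simp only [Nat.cast_le]
    omega
end

section
/- There exist continuous maps a₀, a₁ : S² → M₂(ℂ) such that each a_i(x) is self-adjoint, each a_i is odd (u_x a_i(x) u_x = −a_i(x) for all x ∈ S²), and a₀(x)² + a₁(x)² = 1 for every x ∈ S². (Hence the ℤ/2-action on C(S², M₂(ℂ)) by pointwise conjugation by u_x has plain — and therefore weak — local-triviality dimension at most 1.) -/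
/-- The unit sphere `S² ⊆ ℝ³`. -/
def sphere2 : Set (Fin 3 → ℝ) := {x | x 0 ^ 2 + x 1 ^ 2 + x 2 ^ 2 = 1}

/-- For `x = (x₁, x₂, x₃) ∈ S²`, the self-adjoint unitary
`u_x = [[x₃, x₁ - i·x₂], [x₁ + i·x₂, -x₃]] ∈ M₂(ℂ)`. -/
noncomputable def uMat (x : Fin 3 → ℝ) : Matrix (Fin 2) (Fin 2) ℂ :=
  !![(x 2 : ℂ), (x 0 : ℂ) - Complex.I * (x 1 : ℂ);
     (x 0 : ℂ) + Complex.I * (x 1 : ℂ), -(x 2 : ℂ)]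

lemma uMat_selfAdjoint (v : Fin 3 → ℝ) : IsSelfAdjoint (uMat v) := by
  rw [isSelfAdjoint_iff, Matrix.star_eq_conjTranspose]
  ext i j
  fin_cases i <;> fin_cases j <;> simp [uMat, Matrix.conjTranspose_apply, sub_eq_add_neg]

lemma uMat_sq (v : Fin 3 → ℝ) :
    uMat v ^ 2 = ((v 0 ^ 2 + v 1 ^ 2 + v 2 ^ 2 : ℝ) : ℂ) • (1 : Matrix (Fin 2) (Fin 2) ℂ) := by
  have hI := Complex.I_sq
  rw [sq]
  ext i j
  fin_cases i <;> fin_cases j <;> simp [uMat, Matrix.mul_apply, Fin.sum_univ_two] <;> grind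

lemma uMat_anti (x v : Fin 3 → ℝ) (h : x 0 * v 0 + x 1 * v 1 + x 2 * v 2 = 0) :
    uMat x * uMat v = - (uMat v * uMat x) := by
  have hI := Complex.I_sq
  have h' : (x 0 : ℂ) * v 0 + x 1 * v 1 + x 2 * v 2 = 0 := by exact_mod_cast h
  ext i j
  fin_cases i <;> fin_cases j <;> simp [uMat, Matrix.mul_apply, Fin.sum_univ_two] <;> grind

lemma uMat_odd (x : sphere2) (v : Fin 3 → ℝ)
    (h : x.1 0 * v 0 + x.1 1 * v 1 + x.1 2 * v 2 = 0) :
    uMat x.1 * uMat v * uMat x.1 = - uMat v := by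
  have hx : x.1 0 ^ 2 + x.1 1 ^ 2 + x.1 2 ^ 2 = 1 := x.2
  rw [uMat_anti _ _ h, Matrix.neg_mul, Matrix.mul_assoc, ← sq, uMat_sq, hx]
  simp

lemma uMat_cont : Continuous uMat := by
  refine continuous_matrix fun i j => ?_
  fin_cases i <;> fin_cases j <;> simp [uMat] <;> fun_prop

/-- There are continuous odd self-adjoint maps
`a₀, a₁ : S² → M₂(ℂ)` with `a₀(x)² + a₁(x)² = 1` everywhere; hence the `ℤ/2`-action on
`C(S², M₂(ℂ))` by pointwise conjugation by `u_x` has (plain, hence weak)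
local-triviality dimension at most `1`. -/
theorem stmt9 :
    ∃ a₀ a₁ : ↥sphere2 → Matrix (Fin 2) (Fin 2) ℂ,
      Continuous a₀ ∧ Continuous a₁ ∧
      (∀ x, IsSelfAdjoint (a₀ x)) ∧ (∀ x, IsSelfAdjoint (a₁ x)) ∧
      (∀ x : ↥sphere2, uMat x.1 * a₀ x * uMat x.1 = -(a₀ x)) ∧
      (∀ x : ↥sphere2, uMat x.1 * a₁ x * uMat x.1 = -(a₁ x)) ∧
      (∀ x, a₀ x ^ 2 + a₁ x ^ 2 = 1) := by
  have hpos : ∀ x : sphere2, 0 < 1 + x.1 1 ^ 2 := fun x => by positivity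
  have hk : ∀ i, Continuous fun x : sphere2 => x.1 i := fun i =>
    (continuous_apply i).comp continuous_subtype_val
  have h0 := hk 0
  have h1 := hk 1
  have h2 := hk 2
  have hc : Continuous fun x : sphere2 => (√(1 + x.1 1 ^ 2))⁻¹ :=
    Continuous.inv₀ (Real.continuous_sqrt.comp (continuous_const.add (h1.pow 2))) fun x => (Real.sqrt_pos.2 (hpos x)).ne'
  refine ⟨fun x => uMat ((√(1 + x.1 1 ^ 2))⁻¹ • ![-x.1 1, x.1 0, 0]),
    fun x => uMat ((√(1 + x.1 1 ^ 2))⁻¹ • ![0, -x.1 2, x.1 1]), ?_, ?_,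
    fun x => uMat_selfAdjoint _, fun x => uMat_selfAdjoint _,
    fun x => uMat_odd x _ ?_, fun x => uMat_odd x _ ?_, fun x => ?_⟩
  · refine uMat_cont.comp (hc.smul (continuous_pi fun i => ?_))
    fin_cases i <;> simp
    exacts [h1.neg, h0, continuous_const]
  · refine uMat_cont.comp (hc.smul (continuous_pi fun i => ?_))
    fin_cases i <;> simp
    exacts [continuous_const, h2.neg, h1]
  · simp; ring
  · simp; ring
  · have hx : x.1 0 ^ 2 + x.1 1 ^ 2 + x.1 2 ^ 2 = 1 := x.2
    have hs : (√(1 + x.1 1 ^ 2))⁻¹ ^ 2 * (1 + x.1 1 ^ 2) = 1 := by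
      rw [inv_pow, Real.sq_sqrt (hpos x).le, inv_mul_cancel₀ (hpos x).ne']
    simp only [uMat_sq, ← add_smul, ← Complex.ofReal_add]
    generalize (√(1 + x.1 1 ^ 2))⁻¹ = t at *
    convert one_smul ℂ (1 : Matrix (Fin 2) (Fin 2) ℂ)
    rw [Complex.ofReal_eq_one]
    simp
    linear_combination hs + t ^ 2 * hx
end

section
/- Let A be a unital C*-algebra and α a *-automorphism of A with α^k = id whose fixed-point algebra {a ∈ A : α(a) = a} equals ℂ·1 (i.e., the ℤ/k-action is ergodic). If there exist normal elements a₀,…,a_n ∈ A with α(a_i) = ζ a_i, σ(a_i) ⊆ ✲_k, and Σ_i a_i a_i* invertible (i.e., wdim(A, ℤ/k) < ∞), then there exists a unitary w ∈ A with α(w) = ζ w and w^k = 1 (equivalently, all three local-triviality dimensions of the action vanish). -/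
/-- Let `α` be an ergodic `ℤ/k`-action on a unital C*-algebra `A`
(the fixed-point algebra is `ℂ·1`).  If the weak local-triviality dimension is finite —
i.e. there are normal `a₀, …, a_n` in the `ζ`-eigenspace with spectra in `✲_k` and
`Σᵢ aᵢ aᵢ*` invertible — then there is a unitary `w ∈ A` with `α(w) = ζ·w` and
`w^k = 1` (so all three local-triviality dimensions vanish). -/
theorem stmt12
    {A : Type*} [NormedRing A] [StarRing A] [CStarRing A] [NormedAlgebra ℂ A]
    [CompleteSpace A] [StarModule ℂ A]
    (k : ℕ) (hk : 1 ≤ k)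
    (α : A ≃⋆ₐ[ℂ] A) (hαk : (⇑α)^[k] = id)
    (herg : ∀ a : A, α a = a → ∃ c : ℂ, a = c • (1 : A))
    (n : ℕ) (a : Fin (n + 1) → A)
    (hnormal : ∀ i, IsStarNormal (a i))
    (heig : ∀ i, α (a i) = ltZeta k • a i)
    (hspec : ∀ i, spectrum ℂ (a i) ⊆ ltAsterisk k)
    (hinv : IsUnit (∑ i, a i * star (a i))) :
    ∃ w : A, w ∈ unitary A ∧ α w = ltZeta k • w ∧ w ^ k = 1 := by
  rcases subsingleton_or_nontrivial A with hA | hA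
  · exact ⟨1, one_mem _, Subsingleton.elim _ _, Subsingleton.elim _ _⟩
  have hk0 : k ≠ 0 := by omega
  have hzk : ltZeta k ^ k = 1 := (Complex.isPrimitiveRoot_exp k hk0).pow_eq_one
  have hzn : ‖ltZeta k‖ = 1 := Complex.norm_eq_one_of_pow_eq_one hzk hk0
  have hzz : ltZeta k * star (ltZeta k) = 1 := by
    have := Complex.mul_conj (ltZeta k)
    rw [Complex.normSq_eq_norm_sq, hzn] at this
    simpa using this
  obtain ⟨i, hi⟩ : ∃ i, a i ≠ 0 := by
    by_contra! h
    simp [h] at hinv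
  have hbn := hnormal i
  have hbe := heig i
  have hbs := hspec i
  generalize a i = b at hi hbn hbe hbs
  let : CStarAlgebra A := {}
  let : PartialOrder A := CStarAlgebra.spectralOrder A
  have : StarOrderedRing A := CStarAlgebra.spectralOrderedRing A
  obtain ⟨c, hc⟩ := herg (star b * b) (by
    rw [map_mul, map_star, hbe, star_smul, smul_mul_smul_comm, mul_comm (star _), hzz, one_smul])
  obtain ⟨d, hd⟩ := herg (b ^ k) (by rw [map_pow, hbe, smul_pow, hzk, one_smul])
  have hc' : b * star b = c • (1 : A) := by rw [← hc]; exact hbn.star_comm_self.eq.symm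
  have hc0 : c ≠ 0 := by
    rintro rfl
    rw [zero_smul] at hc
    exact hi (CStarRing.star_mul_self_eq_zero_iff b |>.1 hc)
  -- `c` is a nonnegative real
  have hcnn : 0 ≤ c.re ∧ 0 = c.im := by
    open ComplexOrder in
    have h : 0 ≤ c := spectrum_nonneg_of_nonneg (𝕜 := ℂ) (star_mul_self_nonneg b) (by
      rw [hc, ← Algebra.algebraMap_eq_smul_one, spectrum.scalar_eq]; rfl)
    exact Complex.le_def.1 h
  obtain ⟨z, hz⟩ := spectrum.nonempty b
  have hzd : z ^ k = d := by
    have h := spectrum.pow_mem_pow b k hz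
    rw [hd, ← Algebra.algebraMap_eq_smul_one, spectrum.scalar_eq] at h
    exact h
  obtain ⟨t, ⟨ht0, -⟩, m, -, rfl⟩ := hbs hz
  have hdt : d = (t : ℂ) ^ k := by
    rw [← hzd, mul_pow, ← pow_mul, mul_comm m k, pow_mul, hzk, one_pow, mul_one]
  have hck : c ^ k = (t ^ 2 : ℂ) ^ k := by
    have h : (c • (1 : A)) ^ k = ((t ^ 2 : ℂ) ^ k) • (1 : A) := by
      rw [← hc, Commute.mul_pow hbn.star_comm_self, ← star_pow, hd, hdt, star_smul, star_one,
        smul_mul_smul_comm, mul_one]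
      congr 1
      simp
      ring
    rw [smul_pow, one_pow] at h
    exact smul_left_injective ℂ (one_ne_zero (α := A)) h
  obtain ⟨r, hr0, rfl⟩ : ∃ r : ℝ, 0 ≤ r ∧ (r : ℂ) = c := by
    exact ⟨c.re, hcnn.1, Complex.ext (by simp) (by simpa using hcnn.2)⟩
  have hrt : r = t ^ 2 := by
    have h : r ^ k = (t ^ 2) ^ k := by exact_mod_cast hck
    exact (pow_left_inj₀ hr0 (sq_nonneg t) hk0).1 h
  subst hrt
  have ht : (t : ℂ) ≠ 0 := by
    intro h
    apply hc0
    push_cast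
    rw [h]; simp
  have key : star (t : ℂ)⁻¹ * (t : ℂ)⁻¹ * ((t ^ 2 : ℝ) : ℂ) = 1 := by
    simp
    field_simp
  refine ⟨(t : ℂ)⁻¹ • b, Unitary.mem_iff.2 ⟨?_, ?_⟩, ?_, ?_⟩
  · rw [star_smul, smul_mul_smul_comm, hc, smul_smul, key, one_smul]
  · rw [star_smul, smul_mul_smul_comm, hc', smul_smul, mul_comm (t : ℂ)⁻¹, key, one_smul]
  · rw [map_smul, hbe, smul_comm]
  · rw [smul_pow, hd, hdt, smul_smul, ← mul_pow, inv_mul_cancel₀ ht, one_pow, one_smul]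
end
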